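/- arXiv:2103.07837 — 2 statements merged into one kernel-verified Lean document; each statement's English description precedes it below -/
import Mathlib

section
/- Under assumption (A_k), let u be the entropy solution with shock curve x = φ(t) issuing from (1,0): for t ≤ 1, u(t,x) = u_0(y(t,x)); for 1 < t < 1+ε, u(t,x) = u_0(y_-(t,x)) if x < φ(t) and u(t,x) = u_0(y_+(t,x)) if x > φ(t). Then for all (t,x) in a punctured neighborhood of the blowup point (1,0), excluding the shock curve {x = φ(t), t ≥ 1}: |u(t,x) − u(1,0)| = O(|t−1|^{1/(2k)} + |x|^{1/(2k+1)}), |∂_t u(t,x)| = O((|t−1|^{1/(2k)} + |x|^{1/(2k+1)})^{−(2k−1)}), and |∂_x u(t,x)| = O((|t−1|^{1/(2k)} + |x|^{1/(2k+1)})^{−2k}). -/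
open Real Filter Topology Set Asymptotics

/-- Finite-degeneracy assumption (A_k). -/
def AssumptionA (k : ℕ) (g : ℝ → ℝ) : Prop :=
  1 ≤ k ∧
  ContDiff ℝ (2 * k + 2 : ℕ) g ∧
  (∃ M, ∀ x, |g x| ≤ M) ∧
  deriv g 0 = -1 ∧
  (∀ x, -1 ≤ deriv g x) ∧
  ∃ r : ℝ → ℝ, ContDiff ℝ (2 * k + 2 : ℕ) r ∧
    (∀ᶠ x in 𝓝 (0 : ℝ), g x = -x + x ^ (2 * k + 1) + r x) ∧
    ∀ j : ℕ, j ≤ 2 * k + 2 →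
      (fun x => iteratedDeriv j r x) =O[𝓝 (0 : ℝ)] fun x => x ^ (2 * k + 2 - j)

/-!
Since `u` is constant along characteristics, one has `∂ₓu = u₀' / (1 + t g')` and
`∂ₜu = -g u₀' / (1 + t g')` at the foot `z` of the characteristic through `(t, x)`. With `n = 2k`,
the foot has size at most a multiple of the scale `ρ = |t - 1| ^ (1 / n) + |x| ^ (1 / (n + 1))`, and
`ρ ^ n` is at most a multiple of `|t - 1| + z ^ n`; so everything reduces to the lower bound
`1 + t g' z ≳ |t - 1| + z ^ n` on the Jacobian.

Before time `1` this is immediate from `1 + g' z ≈ (n + 1) z ^ n`. Afterwards it fails near the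
folds `(n + 1) z ^ n ≈ t - 1`, which the shock must hide. Near the blowup point `g z ≈ -z` and `u₀`
is almost affine, so the Rankine–Hugoniot speed is `-(y₋ + y₊) / 2` up to a small multiple of
`y₊ - y₋`. Where `φ ≥ 0` one has `-y₋ ≤ y₊` up to the same kind of error, so `φ` grows at most at a
speed `κ (t - 1) ^ (1 / n)` with `κ` as small as desired, and symmetrically where `φ ≤ 0`. Hence
`|φ t| ≤ κ (t - 1) ^ (1 + 1 / n)`: the shock stays in the middle of the cusp, and the roots on it,
hence also those beyond it, satisfy `z ^ n ≥ (3 / 4) (t - 1) / t`, away from the folds.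
-/

theorem exists_hasDerivAt_implicit {F : ℝ × ℝ → ℝ} {F' : ℝ × ℝ →L[ℝ] ℝ} {p : ℝ × ℝ}
    (hF : HasStrictFDerivAt F F' p) (hp : F' (0, 1) ≠ 0) :
    ∃ ζ : ℝ → ℝ, HasDerivAt ζ (-F' (1, 0) / F' (0, 1)) p.1 ∧ ζ p.1 = p.2 ∧
      ∀ᶠ s in 𝓝 p.1, F (s, ζ s) = F p := by
  let e : ℝ ≃L[ℝ] ℝ := ContinuousLinearEquiv.unitsEquivAut ℝ (Units.mk0 _ hp)
  have he : F' ∘L .inr ℝ ℝ ℝ = (e : ℝ →L[ℝ] ℝ) := by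
    ext
    simp [e]
  have hinv : (F' ∘L .inr ℝ ℝ ℝ).IsInvertible := ⟨e, he.symm⟩
  refine ⟨hF.implicitFunctionOfProdDomain hinv, ?_,
    (hF.eventually_apply_eq_iff_implicitFunctionOfProdDomain hinv).self_of_nhds.1 rfl,
    hF.eventually_apply_implicitFunctionOfProdDomain hinv⟩
  refine (hF.hasStrictFDerivAt_implicitFunctionOfProdDomain hinv).hasFDerivAt.hasDerivAt.congr_deriv
    ?_
  simp [he, e, ContinuousLinearMap.inverse_equiv, div_eq_mul_inv]

theorem hasDerivAt_of_const_along_characteristics {u : ℝ → ℝ → ℝ} {u₀ g : ℝ → ℝ}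
    {u₀' g' t z : ℝ} (hg : HasStrictDerivAt g g' z) (hu₀ : HasDerivAt u₀ u₀' z)
    (hJ : 1 + t * g' ≠ 0) (hu : ∀ᶠ p in 𝓝 (t, z), u p.1 (p.2 + p.1 * g p.2) = u₀ p.2) :
    HasDerivAt (fun s => u s (z + t * g z)) (u₀' * (-g z / (1 + t * g'))) t ∧
      HasDerivAt (u t) (u₀' * (1 / (1 + t * g'))) (z + t * g z) := by
  constructor
  · have hF : HasStrictFDerivAt (fun p : ℝ × ℝ => p.2 + p.1 * g p.2) _ (t, z) :=
      hasStrictFDerivAt_snd.add (hasStrictFDerivAt_fst.mul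
        (hg.hasStrictFDerivAt.comp (t, z) hasStrictFDerivAt_snd))
    obtain ⟨ζ, hζ, rfl : ζ t = z, hroot⟩ := exists_hasDerivAt_implicit hF (by simpa using hJ)
    have hζu : (fun s => u s (ζ t + t * g (ζ t))) =ᶠ[𝓝 t] u₀ ∘ ζ := by
      filter_upwards [hroot, (continuousAt_id.prodMk hζ.continuousAt).eventually hu] with s hs hus
      simpa [hs] using hus
    exact ((hu₀.comp t hζ).congr_of_eventuallyEq hζu).congr_deriv (by simp)
  · have hF : HasStrictFDerivAt (fun p : ℝ × ℝ => p.2 + t * g p.2 - p.1) _ (z + t * g z, z) :=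
      (hasStrictFDerivAt_snd.add ((hg.hasStrictFDerivAt.comp (z + t * g z, z)
        hasStrictFDerivAt_snd).const_mul t)).sub hasStrictFDerivAt_fst
    obtain ⟨ζ, hζ, hζz : ζ (z + t * g z) = z, hroot⟩ :=
      exists_hasDerivAt_implicit hF (by simpa using hJ)
    have hζu : u t =ᶠ[𝓝 (z + t * g z)] u₀ ∘ ζ := by
      have hpair : Tendsto (fun x => (t, ζ x)) (𝓝 (z + t * g z)) (𝓝 (t, z)) :=
        tendsto_const_nhds.prodMk_nhds (by simpa only [hζz] using hζ.continuousAt.tendsto)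
      filter_upwards [hroot, hpair.eventually hu] with x hx hux
      have hx' : ζ x + t * g (ζ x) = x := by linarith
      simpa [hx'] using hux
    exact (((hζz ▸ hu₀).comp _ hζ).congr_of_eventuallyEq hζu).congr_deriv (by simp)

theorem le_mul_sub_of_deriv_le_of_pos {φ φ' : ℝ → ℝ} {a b K : ℝ} (hK : 0 ≤ K) (hab : a ≤ b)
    (hφ : ContinuousOn φ (Icc a b)) (hφ' : ∀ t ∈ Ioo a b, HasDerivAt φ (φ' t) t)
    (hle : ∀ t ∈ Ioo a b, 0 < φ t → φ' t ≤ K) (ha : φ a ≤ 0) : φ b ≤ K * (b - a) := by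
  rcases le_or_gt (φ b) 0 with hb | hb
  · exact hb.trans (mul_nonneg hK (sub_nonneg.2 hab))
  have hcompact : IsCompact (Icc a b ∩ φ ⁻¹' Iic 0) :=
    isCompact_Icc.of_isClosed_subset (hφ.preimage_isClosed_of_isClosed isClosed_Icc isClosed_Iic)
      inter_subset_left
  obtain ⟨c, ⟨⟨hac, hcb⟩, hc : φ c ≤ 0⟩, hlast⟩ :=
    hcompact.exists_isGreatest ⟨a, left_mem_Icc.2 hab, ha⟩
  have hcb' : c < b := hcb.lt_of_ne (by rintro rfl; exact hc.not_gt hb)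
  obtain ⟨t, ht, hslope⟩ := exists_hasDerivAt_eq_slope φ φ' hcb'
    (hφ.mono (Icc_subset_Icc_left hac)) fun t ht => hφ' t ⟨hac.trans_lt ht.1, ht.2⟩
  have htpos : 0 < φ t := by
    by_contra h
    exact ht.1.not_ge (hlast ⟨⟨hac.trans ht.1.le, ht.2.le⟩, not_lt.1 h⟩)
  have hslope_le := hle t ⟨hac.trans_lt ht.1, ht.2⟩ htpos
  rw [hslope, div_le_iff₀ (sub_pos.2 hcb')] at hslope_le
  calc φ b ≤ K * (b - c) := by linarith
    _ ≤ K * (b - a) := by gcongr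

theorem abs_sub_ge_of_abs_deriv_sub_le {U : ℝ → ℝ} {a b c ε : ℝ} (hab : a ≤ b)
    (hU : Differentiable ℝ U) (hU' : ∀ z ∈ Icc a b, |deriv U z - c| ≤ ε) :
    (|c| - ε) * (b - a) ≤ |U b - U a| := by
  have h := (convex_Icc a b).norm_image_sub_le_of_norm_deriv_le (f := fun z => U z - c * z) (C := ε)
    (fun z _ => by fun_prop) (fun z hz => ?_) (left_mem_Icc.2 hab) (right_mem_Icc.2 hab)
  · rw [norm_eq_abs, norm_eq_abs, abs_of_nonneg (sub_nonneg.2 hab)] at h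
    have htri := abs_sub_abs_le_abs_sub (c * (b - a)) (c * (b - a) - (U b - U a))
    rw [abs_mul, abs_of_nonneg (sub_nonneg.2 hab), sub_sub_cancel, abs_sub_comm] at htri
    rw [show U b - c * b - (U a - c * a) = U b - U a - c * (b - a) by ring] at h
    linarith
  · have hd : HasDerivAt (fun z => U z - c * z) (deriv U z - c) z :=
      ((hU z).hasDerivAt.sub ((hasDerivAt_id z).const_mul c)).congr_deriv (by ring)
    simpa only [hd.deriv, norm_eq_abs] using hU' z hz

section ShockSpeed

variable {F U g : ℝ → ℝ} {a b c ε : ℝ}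

theorem abs_flux_sub_add_midpoint_mul_le (ha : a ≤ 0) (hb : 0 ≤ b) (hε₀ : 0 ≤ ε)
    (hε : ε ≤ 1 / 2) (hU : Differentiable ℝ U) (hF : ∀ z, HasDerivAt F (g z * deriv U z) z)
    (hU' : ∀ z ∈ Icc a b, |deriv U z - c| ≤ ε * |c|) (hg : ∀ z ∈ Icc a b, |g z + z| ≤ ε * |z|) :
    |F b - F a + (a + b) / 2 * (U b - U a)| ≤ 2 * ε * |c| * (b - a) ^ 2 := by
  set m := (a + b) / 2 with hm
  -- The subtracted parabola takes equal values at `a` and `b`.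
  have hG : ∀ z, HasDerivAt (fun z => F z + m * U z - c * (m * z - z ^ 2 / 2))
      ((g z + z) * deriv U z + (m - z) * (deriv U z - c)) z := fun z =>
    (((hF z).add ((hU z).hasDerivAt.const_mul m)).sub ((((hasDerivAt_id z).const_mul m).sub
      ((hasDerivAt_pow 2 z).div_const 2)).const_mul c)).congr_deriv (by push_cast; ring)
  have hbound : ∀ z ∈ Icc a b,
      ‖(g z + z) * deriv U z + (m - z) * (deriv U z - c)‖ ≤ 2 * ε * |c| * (b - a) := by
    intro z hz
    have hzab : |z| ≤ b - a := abs_le.2 ⟨by linarith [hz.1], by linarith [hz.2]⟩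
    have hmz : |m - z| ≤ (b - a) / 2 := abs_le.2 ⟨by linarith [hz.2], by linarith [hz.1]⟩
    have hUz : |deriv U z| ≤ 3 / 2 * |c| := by
      nlinarith [hU' z hz, abs_sub_abs_le_abs_sub (deriv U z) c, abs_nonneg c]
    calc ‖(g z + z) * deriv U z + (m - z) * (deriv U z - c)‖
        ≤ |g z + z| * |deriv U z| + |m - z| * |deriv U z - c| := by
          rw [← abs_mul, ← abs_mul]; exact abs_add_le _ _
      _ ≤ ε * (b - a) * (3 / 2 * |c|) + (b - a) / 2 * (ε * |c|) := by
          gcongr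
          · exact mul_nonneg hε₀ ((abs_nonneg z).trans hzab)
          · exact (hg z hz).trans (by gcongr)
          · exact (abs_nonneg _).trans hmz
          · exact hU' z hz
      _ = 2 * ε * |c| * (b - a) := by ring
  have hab : 0 ≤ b - a := by linarith
  have h := (convex_Icc a b).norm_image_sub_le_of_norm_hasDerivWithin_le
    (fun z _ => (hG z).hasDerivWithinAt) hbound (left_mem_Icc.2 (by linarith))
    (right_mem_Icc.2 (by linarith))
  rw [norm_eq_abs, norm_eq_abs, abs_of_nonneg hab] at h
  rw [sq, ← mul_assoc]
  convert h using 2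
  rw [hm]
  ring

theorem abs_shockSpeed_add_midpoint_le (hc : c ≠ 0) (ha : a < 0) (hb : 0 < b) (hε₀ : 0 ≤ ε)
    (hε : ε ≤ 1 / 2) (hU : Differentiable ℝ U) (hF : ∀ z, HasDerivAt F (g z * deriv U z) z)
    (hU' : ∀ z ∈ Icc a b, |deriv U z - c| ≤ ε * |c|) (hg : ∀ z ∈ Icc a b, |g z + z| ≤ ε * |z|) :
    |(F b - F a) / (U b - U a) + (a + b) / 2| ≤ 4 * ε * (b - a) := by
  have hc₀ : 0 < |c| := abs_pos.2 hc
  have hab : 0 < b - a := by linarith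
  have hden : |c| / 2 * (b - a) ≤ |U b - U a| :=
    (mul_le_mul_of_nonneg_right (by nlinarith) hab.le).trans
      (abs_sub_ge_of_abs_deriv_sub_le (by linarith) hU hU')
  have hU₀ : 0 < |U b - U a| := (by positivity : 0 < |c| / 2 * (b - a)).trans_le hden
  rw [div_add' _ _ _ (abs_pos.1 hU₀), abs_div, div_le_iff₀ hU₀]
  calc |F b - F a + (a + b) / 2 * (U b - U a)| ≤ 4 * ε * (b - a) * (|c| / 2 * (b - a)) := by
        linarith [abs_flux_sub_add_midpoint_mul_le ha.le hb.le hε₀ hε hU hF hU' hg]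
    _ ≤ 4 * ε * (b - a) * |U b - U a| := by gcongr

end ShockSpeed

section BlowupScale

/-- The distance of `(t, x)` to the blowup point `(1, 0)` which is homogeneous for the scaling of
the cusp of order `n`: a root of size `z` corresponds to `|t - 1| ∼ |z| ^ n` and
`|x| ∼ |z| ^ (n + 1)`. -/
noncomputable def blowupScale (n : ℕ) (t x : ℝ) : ℝ :=
  |t - 1| ^ ((n : ℝ)⁻¹) + |x| ^ (((n + 1 : ℕ) : ℝ)⁻¹)

variable {n : ℕ} {t x z v : ℝ}

theorem mul_pow_le_pow_mul {c a : ℝ} (hc : 1 ≤ c) (ha : 0 ≤ a) (hn : n ≠ 0) :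
    c * a ^ n ≤ (c * a) ^ n := by
  rw [mul_pow]
  gcongr
  exact le_self_pow₀ hc hn

theorem abs_root_le_blowupScale (hn : n ≠ 0) (ht : 1 / 2 ≤ t)
    (hv : 3 / 4 * |z| ^ (n + 1) ≤ |v + z|) (hx : z + t * v = x) :
    |z| ≤ 8 * blowupScale n t x := by
  set σ := |t - 1| ^ ((n : ℝ)⁻¹)
  set X := |x| ^ (((n + 1 : ℕ) : ℝ)⁻¹)
  have hσ₀ : 0 ≤ σ := by positivity
  have hX₀ : 0 ≤ X := by positivity
  by_contra! hlt
  replace hlt : 8 * (σ + X) < |z| := hlt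
  have hz : 0 < |z| := (by positivity : (0 : ℝ) ≤ 8 * (σ + X)).trans_lt hlt
  have ht1 : 8 * |t - 1| ≤ |z| ^ n := by
    rw [← rpow_inv_natCast_pow (abs_nonneg (t - 1)) hn]
    exact (mul_pow_le_pow_mul (by norm_num) hσ₀ hn).trans (by gcongr; linarith)
  have hx1 : 8 * |x| ≤ |z| ^ (n + 1) := by
    rw [← rpow_inv_natCast_pow (abs_nonneg x) n.succ_ne_zero]
    exact (mul_pow_le_pow_mul (by norm_num) hX₀ n.succ_ne_zero).trans (by gcongr; linarith)
  have htv : t * |v + z| ≤ |x| + |t - 1| * |z| := by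
    rw [← abs_of_nonneg (by linarith : 0 ≤ t), ← abs_mul, ← abs_mul, abs_of_nonneg (a := t)
      (by linarith), show t * (v + z) = x + (t - 1) * z by linarith]
    exact abs_add_le _ _
  have hzn : 0 < |z| ^ (n + 1) := by positivity
  have ht1z : 8 * |t - 1| * |z| ≤ |z| ^ (n + 1) := by rw [pow_succ]; gcongr
  nlinarith [abs_nonneg (v + z)]

theorem blowupScale_pow_le (ht₀ : 0 ≤ t) (ht : t ≤ 2) (hn : n ≠ 0)
    (hv : |v + z| ≤ 2 * |z| ^ (n + 1)) (hx : z + t * v = x) :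
    blowupScale n t x ^ n ≤ 6 ^ n * (|t - 1| + |z| ^ n) := by
  set σ := |t - 1| ^ ((n : ℝ)⁻¹)
  set X := |x| ^ (((n + 1 : ℕ) : ℝ)⁻¹)
  set s := max σ |z| with hs
  have hσ₀ : 0 ≤ σ := by positivity
  have hσs : σ ≤ s := le_max_left _ _
  have hzs : |z| ≤ s := le_max_right _ _
  have hs₀ : 0 ≤ s := hσ₀.trans hσs
  have hσn : σ ^ n = |t - 1| := rpow_inv_natCast_pow (abs_nonneg _) hn
  have hxs : |x| ≤ (5 * s) ^ (n + 1) :=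
    calc |x| = |t * (v + z) - (t - 1) * z| := by rw [← hx]; ring_nf
      _ ≤ t * |v + z| + |t - 1| * |z| := by
        rw [← abs_mul (t - 1), ← abs_of_nonneg ht₀, ← abs_mul, abs_of_nonneg ht₀]
        exact abs_sub _ _
      _ ≤ 2 * (2 * s ^ (n + 1)) + s ^ n * s := by
        rw [← hσn]
        gcongr
        exact hv.trans (by gcongr)
      _ = 5 * s ^ (n + 1) := by ring
      _ ≤ (5 * s) ^ (n + 1) := mul_pow_le_pow_mul (by norm_num) hs₀ n.succ_ne_zero
  have hXs : X ≤ 5 * s :=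
    (rpow_inv_le_iff_of_pos (abs_nonneg x) (by positivity) (by positivity)).2
      (by rw [rpow_natCast]; exact hxs)
  calc (σ + X) ^ n ≤ (6 * s) ^ n := by gcongr; linarith
    _ = 6 ^ n * s ^ n := mul_pow _ _ _
    _ ≤ 6 ^ n * (|t - 1| + |z| ^ n) := by
      gcongr
      rcases max_choice σ |z| with h | h <;> rw [hs, h]
      · rw [hσn]; exact le_add_of_nonneg_right (by positivity)
      · exact le_add_of_nonneg_left (abs_nonneg _)

theorem blowupScale_nonneg (n : ℕ) (t x : ℝ) : 0 ≤ blowupScale n t x := by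
  unfold blowupScale; positivity

theorem blowupScale_pos (h : (t, x) ≠ (1, 0)) : 0 < blowupScale n t x := by
  rcases eq_or_ne t 1 with rfl | ht
  · have hx : x ≠ 0 := fun hx => h (by rw [hx])
    exact add_pos_of_nonneg_of_pos (by positivity) (rpow_pos_of_pos (abs_pos.2 hx) _)
  · exact add_pos_of_pos_of_nonneg (rpow_pos_of_pos (abs_pos.2 (sub_ne_zero.2 ht)) _)
      (by positivity)

theorem blowupScale_two_mul (k : ℕ) (t x : ℝ) : blowupScale (2 * k) t x =
    |t - 1| ^ (1 / (2 * (k : ℝ))) + |x| ^ (1 / (2 * (k : ℝ) + 1)) := by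
  simp only [blowupScale, one_div]
  push_cast
  rfl

end BlowupScale

/-- Quantitative form, on `[-η, η]`, of the degenerate profile `g z ≈ -z + z ^ (n + 1)`: both `g`
and `deriv g` agree with the model up to a relative error `ε`. The smallness of `ε` is what the
control of the shock curve requires. -/
structure CuspProfile (n : ℕ) (g : ℝ → ℝ) (ε η : ℝ) : Prop where
  even : Even n
  ne_zero : n ≠ 0
  eps_pos : 0 < ε
  eps_le : 640 * (n + 2) * ε ≤ 1
  pos : 0 < η
  pow_le : η ^ n ≤ ε
  contDiff : ContDiff ℝ 1 g
  neg_one_le_deriv : ∀ z, -1 ≤ deriv g z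
  abs_remainder_le : ∀ z, |z| ≤ η → |g z + z - z ^ (n + 1)| ≤ ε * |z| ^ (n + 1)
  abs_deriv_remainder_le : ∀ z, |z| ≤ η → |deriv g z + 1 - (n + 1) * z ^ n| ≤ ε * z ^ n

theorem deriv_neg_comp_neg (g : ℝ → ℝ) (z : ℝ) : deriv (fun w => -g (-w)) z = deriv g (-z) := by
  rw [deriv.fun_neg, deriv_comp_neg, neg_neg]

namespace CuspProfile

variable {n : ℕ} {g : ℝ → ℝ} {ε η M t x z a b σ κ : ℝ}

theorem reflect (h : CuspProfile n g ε η) : CuspProfile n (fun z => -g (-z)) ε η where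
  __ := h
  contDiff := (h.contDiff.comp contDiff_neg).neg
  neg_one_le_deriv z := by rw [deriv_neg_comp_neg]; exact h.neg_one_le_deriv _
  abs_remainder_le z hz := by
    have hrem := h.abs_remainder_le (-z) (by rwa [abs_neg])
    rw [h.even.add_one.neg_pow, abs_neg z] at hrem
    rw [← abs_neg]
    convert hrem using 2
    ring
  abs_deriv_remainder_le z hz := by
    have hrem := h.abs_deriv_remainder_le (-z) (by rwa [abs_neg])
    rwa [h.even.neg_pow, ← deriv_neg_comp_neg] at hrem

theorem differentiable (h : CuspProfile n g ε η) : Differentiable ℝ g :=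
  h.contDiff.differentiable one_ne_zero

theorem eps_le_eighth (h : CuspProfile n g ε η) : ε ≤ 1 / 8 := by
  nlinarith [h.eps_le, h.eps_pos, n.cast_nonneg (α := ℝ)]

theorem apply_zero (h : CuspProfile n g ε η) : g 0 = 0 := by
  simpa using h.abs_remainder_le 0 (by simpa using h.pos.le)

theorem abs_add_self_le (h : CuspProfile n g ε η) (hz : |z| ≤ η) :
    |g z + z| ≤ (1 + ε) * |z| ^ (n + 1) := by
  have htri := abs_sub_abs_le_abs_sub (g z + z) (z ^ (n + 1))
  rw [abs_pow] at htri
  linarith [h.abs_remainder_le z hz]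

theorem le_abs_add_self (h : CuspProfile n g ε η) (hz : |z| ≤ η) :
    (1 - ε) * |z| ^ (n + 1) ≤ |g z + z| := by
  have htri := abs_sub_abs_le_abs_sub (z ^ (n + 1)) (g z + z)
  rw [abs_pow, abs_sub_comm] at htri
  linarith [h.abs_remainder_le z hz]

theorem abs_add_self_le_mul (h : CuspProfile n g ε η) (hz : |z| ≤ η) :
    |g z + z| ≤ 2 * ε * |z| :=
  have := h.eps_pos
  calc |g z + z| ≤ (1 + ε) * |z| ^ n * |z| := by
        rw [mul_assoc, ← pow_succ]; exact h.abs_add_self_le hz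
    _ ≤ 2 * ε * |z| := by
        gcongr
        · linarith [h.eps_le_eighth]
        · exact (pow_le_pow_left₀ (abs_nonneg z) hz n).trans h.pow_le

theorem add_self_le_of_nonneg (h : CuspProfile n g ε η) (hb : b ∈ Icc 0 η) :
    g b + b ≤ (1 + ε) * b ^ (n + 1) := by
  simpa only [abs_of_nonneg hb.1] using
    (le_abs_self _).trans (h.abs_add_self_le (abs_le.2 ⟨by linarith [hb.1, h.pos], hb.2⟩))

theorem le_add_self_of_nonneg (h : CuspProfile n g ε η) (hb : b ∈ Icc 0 η) :
    (1 - ε) * b ^ (n + 1) ≤ g b + b := by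
  have hrem := h.abs_remainder_le b (abs_le.2 ⟨by linarith [hb.1, h.pos], hb.2⟩)
  rw [abs_of_nonneg hb.1] at hrem
  linarith [(abs_le.1 hrem).1]

theorem le_neg_add_self_of_nonpos (h : CuspProfile n g ε η) (ha : a ∈ Icc (-η) 0) :
    (1 - ε) * (-a) ^ (n + 1) ≤ -(g a + a) := by
  have hbound := h.reflect.le_add_self_of_nonneg (b := -a)
    ⟨by linarith [ha.2], by linarith [ha.1]⟩
  rw [neg_neg] at hbound
  linarith

theorem two_mul_pow_le_deriv (h : CuspProfile n g ε η) (hz : |z| ≤ η) :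
    2 * z ^ n ≤ deriv g z + 1 := by
  have hn : (2 : ℝ) ≤ n := by
    exact_mod_cast Nat.le_of_dvd (Nat.pos_of_ne_zero h.ne_zero) h.even.two_dvd
  nlinarith [(abs_le.1 (h.abs_deriv_remainder_le z hz)).1, h.even.pow_nonneg z, h.eps_le_eighth]

theorem deriv_add_one_le (h : CuspProfile n g ε η) (hz : |z| ≤ η) :
    deriv g z + 1 ≤ (n + 2) * z ^ n := by
  nlinarith [(abs_le.1 (h.abs_deriv_remainder_le z hz)).2, h.even.pow_nonneg z, h.eps_le_eighth]

theorem monotone_add_self (h : CuspProfile n g ε η) : Monotone fun z => z + g z := by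
  refine monotone_of_deriv_nonneg (by simpa using differentiable_id.add h.differentiable)
    fun z => ?_
  rw [deriv_fun_add differentiableAt_fun_id h.differentiable.differentiableAt, deriv_id'']
  linarith [h.neg_one_le_deriv z]

theorem jacobian_ge_of_le_one (h : CuspProfile n g ε η) (ht : 1 / 2 ≤ t) (ht1 : t ≤ 1)
    (hz : |z| ≤ η) : (|t - 1| + z ^ n) / 6 ≤ 1 + t * deriv g z := by
  rw [abs_of_nonpos (by linarith)]
  nlinarith [h.two_mul_pow_le_deriv hz, h.even.pow_nonneg z]

theorem jacobian_ge_of_one_le (h : CuspProfile n g ε η) (ht : 1 ≤ t) (hz : |z| ≤ η)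
    (hgap : 3 / 4 * (t - 1) ≤ t * z ^ n) : (|t - 1| + z ^ n) / 6 ≤ 1 + t * deriv g z := by
  rw [abs_of_nonneg (by linarith)]
  nlinarith [h.two_mul_pow_le_deriv hz, h.even.pow_nonneg z]

theorem lt_of_le (h : CuspProfile n g ε η) (hM : |g z| ≤ M)
    (hsmall : |t - 1| * M + |x| < η ^ (n + 1) / 2) (hz : η ≤ z) : x < z + t * g z := by
  have hmono : η + g η ≤ z + g z := h.monotone_add_self hz
  have hη := h.le_add_self_of_nonneg (right_mem_Icc.2 h.pos.le)
  have hM' : |(t - 1) * g z| ≤ |t - 1| * M := by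
    rw [abs_mul]; exact mul_le_mul_of_nonneg_left hM (abs_nonneg _)
  nlinarith [neg_le_of_abs_le hM', le_abs_self x, h.eps_le_eighth, pow_pos h.pos (n + 1)]

theorem abs_root_lt (h : CuspProfile n g ε η) (hM : |g z| ≤ M)
    (hsmall : |t - 1| * M + |x| < η ^ (n + 1) / 2) (hz : z + t * g z = x) : |z| < η := by
  refine abs_lt.2 ⟨?_, ?_⟩ <;> by_contra! hcon
  · have hlt := h.reflect.lt_of_le (z := -z) (t := t) (x := -x) (M := M) (by simpa using hM)
      (by rwa [abs_neg]) (by linarith)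
    rw [neg_neg] at hlt
    linarith
  · exact (h.lt_of_le hM hsmall hcon).ne' hz

theorem exists_root_gt (h : CuspProfile n g ε η) (hM : |g η| ≤ M)
    (hsmall : |t - 1| * M + |x| < η ^ (n + 1) / 2) (hbη : b ≤ η) (hb : b + t * g b < x) :
    ∃ z ∈ Ioo b η, z + t * g z = x :=
  intermediate_value_Ioo hbη
    (continuous_id.add (continuous_const.mul h.differentiable.continuous)).continuousOn
    ⟨hb, h.lt_of_le hM hsmall le_rfl⟩

theorem exists_root (h : CuspProfile n g ε η) (hM : ∀ z, |g z| ≤ M)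
    (hsmall : |t - 1| * M + |x| < η ^ (n + 1) / 2) : ∃ z, |z| < η ∧ z + t * g z = x := by
  have hleft := h.reflect.lt_of_le (z := η) (t := t) (x := -x) (by simpa using hM (-η))
    (by rwa [abs_neg]) le_rfl
  obtain ⟨z, hz, hzx⟩ := h.exists_root_gt (hM η) hsmall (b := -η) (by linarith [h.pos])
    (by linarith)
  exact ⟨z, abs_lt.2 hz, hzx⟩

theorem root_dist_le (h : CuspProfile n g ε η) (ht : 1 ≤ t) (hσ : 0 ≤ σ) (hσn : σ ^ n = t - 1)
    (ha : a ∈ Ioo (-η) 0) (hb : b ∈ Ioo 0 η) (hax : a + t * g a = x) (hbx : b + t * g b = x) :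
    b - a ≤ 4 * σ := by
  have hw : 0 < b - a := by linarith [ha.2, hb.1]
  have hsum : b ^ (n + 1) + (-a) ^ (n + 1) ≤ 2 * (g b + b - (g a + a)) := by
    nlinarith [h.le_add_self_of_nonneg ⟨hb.1.le, hb.2.le⟩, pow_pos hb.1 (n + 1),
      h.le_neg_add_self_of_nonpos ⟨ha.1.le, ha.2.le⟩, pow_pos (neg_pos.2 ha.2) (n + 1),
      h.eps_le_eighth]
  have hpow : (b - a) ^ n * (b - a) ≤ 2 ^ n * (2 * σ ^ n) * (b - a) :=
    calc (b - a) ^ n * (b - a) = (b + -a) ^ (n + 1) := by rw [pow_succ, sub_eq_add_neg]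
      _ ≤ 2 ^ n * (b ^ (n + 1) + (-a) ^ (n + 1)) :=
        add_pow_le hb.1.le (by linarith [ha.2]) (n + 1)
      _ ≤ 2 ^ n * (2 * (t * (g b + b - (g a + a)))) := by
        have hpos : 0 < b ^ (n + 1) + (-a) ^ (n + 1) :=
          add_pos (pow_pos hb.1 _) (pow_pos (neg_pos.2 ha.2) _)
        gcongr
        linarith [le_mul_of_one_le_left (by linarith : 0 ≤ g b + b - (g a + a)) ht]
      _ = 2 ^ n * (2 * σ ^ n) * (b - a) := by
        rw [hσn]
        linear_combination 2 ^ n * 2 * (hbx - hax)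
  refine le_of_pow_le_pow_left₀ h.ne_zero (by positivity) ?_
  calc (b - a) ^ n ≤ 2 ^ n * (2 * σ ^ n) := le_of_mul_le_mul_right hpow hw
    _ ≤ 2 ^ n * (2 * σ) ^ n := by gcongr; exact mul_pow_le_pow_mul one_le_two hσ h.ne_zero
    _ = (4 * σ) ^ n := by rw [← mul_pow]; ring

theorem neg_left_root_le (h : CuspProfile n g ε η) (ht : 0 < t) (ha : a ∈ Ioo (-η) 0)
    (hb : b ∈ Ioo 0 η) (hax : a + t * g a = x) (hbx : b + t * g b = x) (hx : 0 ≤ x) :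
    -a ≤ (1 + 4 * ε) * b := by
  have hb' := h.add_self_le_of_nonneg ⟨hb.1.le, hb.2.le⟩
  have ha' := h.le_neg_add_self_of_nonpos ⟨ha.1.le, ha.2.le⟩
  have hε := h.eps_le_eighth
  have hε₀ := h.eps_pos
  have hb₀ : 0 < b := hb.1
  have ha₀ : 0 < -a := by linarith [ha.2]
  have hright : t - 1 ≤ t * ((1 + ε) * b ^ n) := by
    refine le_of_mul_le_mul_right (a := b) ?_ hb₀
    calc (t - 1) * b ≤ t * (g b + b) := by linarith
      _ ≤ t * ((1 + ε) * b ^ n) * b := by rw [mul_assoc, mul_assoc, ← pow_succ]; gcongr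
  have hleft : t * ((1 - ε) * (-a) ^ n) ≤ t - 1 := by
    refine le_of_mul_le_mul_right (a := -a) ?_ ha₀
    calc t * ((1 - ε) * (-a) ^ n) * -a ≤ t * -(g a + a) := by
          rw [mul_assoc, mul_assoc, ← pow_succ]; gcongr
      _ ≤ (t - 1) * -a := by linarith
  have hpow : (1 - ε) * (-a) ^ n ≤ (1 - ε) * ((1 + 4 * ε) * b) ^ n :=
    calc (1 - ε) * (-a) ^ n ≤ (1 + ε) * b ^ n := le_of_mul_le_mul_left (hleft.trans hright) ht
      _ ≤ (1 - ε) * ((1 + 4 * ε) * b ^ n) := by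
        rw [← mul_assoc]; gcongr; nlinarith
      _ ≤ (1 - ε) * ((1 + 4 * ε) * b) ^ n := by
        gcongr
        · linarith
        · exact mul_pow_le_pow_mul (by linarith) hb₀.le h.ne_zero
  exact le_of_pow_le_pow_left₀ h.ne_zero (by positivity)
    (le_of_mul_le_mul_left hpow (by linarith))

theorem outer_root_pow_ge (h : CuspProfile n g ε η) (ht : 1 ≤ t) (ht2 : t ≤ 2)
    (hσn : σ ^ n = t - 1) (hκ : 0 ≤ κ) (hκn : 16 * (n + 2) * κ ≤ 1) (hb : b ∈ Ioo 0 η)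
    (hbx : b + t * g b = x) (hJ : 0 ≤ 1 + t * deriv g b) (hx : -(κ * σ * (t - 1)) ≤ x) :
    3 / 4 * (t - 1) ≤ t * b ^ n := by
  have hb₀ : 0 < b := hb.1
  have hbη : |b| ≤ η := abs_le.2 ⟨by linarith [h.pos], hb.2.le⟩
  have hσb : σ ≤ 2 * (n + 2) * b := by
    refine le_of_pow_le_pow_left₀ h.ne_zero (by positivity) ?_
    calc σ ^ n ≤ t * (deriv g b + 1) := by rw [hσn]; linarith
      _ ≤ t * ((n + 2) * b ^ n) := by gcongr; exact h.deriv_add_one_le hbη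
      _ ≤ 2 * ((n + 2) * b ^ n) := by gcongr
      _ = 2 * (n + 2) * b ^ n := by ring
      _ ≤ (2 * (n + 2) * b) ^ n :=
        mul_pow_le_pow_mul (by linarith [n.cast_nonneg (α := ℝ)]) hb₀.le h.ne_zero
  have hκσ : κ * σ ≤ b / 8 :=
    calc κ * σ ≤ κ * (2 * (n + 2) * b) := by gcongr
      _ = 16 * (n + 2) * κ * (b / 8) := by ring
      _ ≤ 1 * (b / 8) := by gcongr
      _ = b / 8 := one_mul _
  have hmain : 7 / 8 * (t - 1) * b ≤ t * (9 / 8 * b ^ n) * b :=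
    calc 7 / 8 * (t - 1) * b = -(b / 8 * (t - 1)) + (t - 1) * b := by ring
      _ ≤ -(κ * σ * (t - 1)) + (t - 1) * b := by gcongr
      _ ≤ t * (g b + b) := by linarith
      _ ≤ t * ((1 + ε) * b ^ (n + 1)) := by
        gcongr; exact h.add_self_le_of_nonneg ⟨hb₀.le, hb.2.le⟩
      _ ≤ t * (9 / 8 * b ^ (n + 1)) := by gcongr; linarith [h.eps_le_eighth]
      _ = t * (9 / 8 * b ^ n) * b := by ring
  linarith [le_of_mul_le_mul_right hmain hb₀]

end CuspProfile

/-- An admissible foot `z` of a characteristic through `(t, x)`. For `t > 1` the negative and the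
positive ones are `y₋` and `y₊`; the sign of the Jacobian excludes the middle root `y₀`. -/
def IsOuterRoot (g : ℝ → ℝ) (t x z : ℝ) : Prop :=
  z + t * g z = x ∧ 0 ≤ 1 + t * deriv g z

theorem IsOuterRoot.reflect {g : ℝ → ℝ} {t x z : ℝ} (h : IsOuterRoot g t x z) :
    IsOuterRoot (fun w => -g (-w)) t (-x) (-z) := by
  refine ⟨?_, ?_⟩
  · simp only [neg_neg]; linarith [h.1]
  · rw [deriv_neg_comp_neg, neg_neg]; exact h.2

/-- A shock curve `x = φ t` issuing from `(1, 0)`: on the time interval `(1, 1 + τ)` it lies over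
two outer roots in `(-δ, δ)` of opposite signs, and moves at the Rankine–Hugoniot speed they
define. -/
structure IsShock (f u₀ g φ : ℝ → ℝ) (τ δ : ℝ) : Prop where
  apply_one : φ 1 = 0
  continuousOn : ContinuousOn φ (Ico 1 (1 + τ))
  exists_roots : ∀ t ∈ Ioo 1 (1 + τ), ∃ a ∈ Ioo (-δ) 0, ∃ b ∈ Ioo 0 δ,
    IsOuterRoot g t (φ t) a ∧ IsOuterRoot g t (φ t) b ∧
      HasDerivAt φ ((f (u₀ b) - f (u₀ a)) / (u₀ b - u₀ a)) t

/-- The function `u` is, for times in `(1 - τ, 1 + τ)` and positions and feet in `(-δ, δ)`, given by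
the characteristics up to time `1`, and by those issuing from the negative (resp. positive) outer
roots to the left (resp. right) of the curve `φ` afterwards. -/
structure IsEntropySolution (u₀ g : ℝ → ℝ) (u : ℝ → ℝ → ℝ) (φ : ℝ → ℝ) (τ δ : ℝ) : Prop where
  eq_of_le_one : ∀ t ∈ Ioc (1 - τ) 1, ∀ x z, |x| < δ → |z| < δ → z + t * g z = x → u t x = u₀ z
  eq_of_lt_shock : ∀ t ∈ Ioo 1 (1 + τ), ∀ x z, |x| < δ → z ∈ Ioo (-δ) 0 → IsOuterRoot g t x z →
    x < φ t → u t x = u₀ z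
  eq_of_shock_lt : ∀ t ∈ Ioo 1 (1 + τ), ∀ x z, |x| < δ → z ∈ Ioo 0 δ → IsOuterRoot g t x z →
    φ t < x → u t x = u₀ z

/-- A flux `f` and a datum `u₀` with `f' ∘ u₀ = g` a cusp profile, such that on `[-η, η]` the slope
of `u₀` is constant up to a relative error `2 * ε`. The relation `f' ∘ u₀ = g` is encoded in the
derivative of `f ∘ u₀`. -/
structure CuspDatum (n : ℕ) (f u₀ g : ℝ → ℝ) (ε η : ℝ) : Prop extends CuspProfile n g ε η where
  differentiable_datum : Differentiable ℝ u₀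
  deriv_ne_zero : deriv u₀ 0 ≠ 0
  abs_deriv_sub_le : ∀ z, |z| ≤ η → |deriv u₀ z - deriv u₀ 0| ≤ 2 * ε * |deriv u₀ 0|
  hasDerivAt_flux : ∀ z, HasDerivAt (fun w => f (u₀ w)) (g z * deriv u₀ z) z

/-- A foot `z` of a characteristic through `(t, x)` near which `u` is constant along
characteristics, with a quantitative lower bound on the Jacobian of the characteristic map. -/
structure IsRegularFoot (n : ℕ) (u₀ g : ℝ → ℝ) (u : ℝ → ℝ → ℝ) (t x z : ℝ) : Prop where
  root : z + t * g z = x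
  jacobian_ge : (|t - 1| + z ^ n) / 6 ≤ 1 + t * deriv g z
  eventually_eq : ∀ᶠ p in 𝓝 (t, z), u p.1 (p.2 + p.1 * g p.2) = u₀ p.2

section Reflection

variable {n : ℕ} {f u₀ g φ : ℝ → ℝ} {u : ℝ → ℝ → ℝ} {ε η τ τ' δ δ' t x z : ℝ}

theorem IsShock.reflect (h : IsShock f u₀ g φ τ δ) :
    IsShock (fun v => -f v) (fun z => u₀ (-z)) (fun z => -g (-z)) (fun t => -φ t) τ δ where
  apply_one := by rw [h.apply_one, neg_zero]
  continuousOn := h.continuousOn.neg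
  exists_roots t ht := by
    obtain ⟨a, ha, b, hb, hroota, hrootb, hder⟩ := h.exists_roots t ht
    refine ⟨-b, ⟨by linarith [hb.2], by linarith [hb.1]⟩, -a,
      ⟨by linarith [ha.2], by linarith [ha.1]⟩, hrootb.reflect, hroota.reflect, ?_⟩
    rw [neg_neg, neg_neg, ← neg_sub (u₀ b), div_neg, neg_sub_neg]
    exact hder.neg

theorem IsEntropySolution.reflect (h : IsEntropySolution u₀ g u φ τ δ) :
    IsEntropySolution (fun z => u₀ (-z)) (fun z => -g (-z)) (fun t x => u t (-x)) (fun t => -φ t)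
      τ δ where
  eq_of_le_one t ht x z hx hz hroot :=
    h.eq_of_le_one t ht (-x) (-z) (by rwa [abs_neg]) (by rwa [abs_neg]) (by linarith)
  eq_of_lt_shock t ht x z hx hz hroot hlt := by
    have hroot' := hroot.reflect
    simp only [neg_neg] at hroot'
    exact h.eq_of_shock_lt t ht (-x) (-z) (by rwa [abs_neg])
      ⟨by linarith [hz.2], by linarith [hz.1]⟩ hroot' (by linarith)
  eq_of_shock_lt t ht x z hx hz hroot hlt := by
    have hroot' := hroot.reflect
    simp only [neg_neg] at hroot'
    exact h.eq_of_lt_shock t ht (-x) (-z) (by rwa [abs_neg])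
      ⟨by linarith [hz.2], by linarith [hz.1]⟩ hroot' (by linarith)

theorem CuspDatum.reflect (h : CuspDatum n f u₀ g ε η) :
    CuspDatum n (fun v => -f v) (fun z => u₀ (-z)) (fun z => -g (-z)) ε η where
  __ := h.toCuspProfile.reflect
  differentiable_datum := h.differentiable_datum.comp differentiable_neg
  deriv_ne_zero := by
    rw [deriv_comp_neg, neg_zero]; exact neg_ne_zero.2 h.deriv_ne_zero
  abs_deriv_sub_le z hz := by
    rw [deriv_comp_neg, deriv_comp_neg, neg_zero, neg_sub_neg, abs_sub_comm, abs_neg]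
    exact h.abs_deriv_sub_le (-z) (by rwa [abs_neg])
  hasDerivAt_flux z := by
    rw [deriv_comp_neg, neg_mul_neg]
    exact (((h.hasDerivAt_flux (-z)).comp z (hasDerivAt_neg z)).neg).congr_deriv (by ring)

theorem IsRegularFoot.of_reflect (hn : Even n)
    (h : IsRegularFoot n (fun z => u₀ (-z)) (fun z => -g (-z)) (fun t x => u t (-x)) t x z) :
    IsRegularFoot n u₀ g u t (-x) (-z) where
  root := by linarith [h.root]
  jacobian_ge := by
    have hJ := h.jacobian_ge
    rwa [deriv_neg_comp_neg, ← hn.neg_pow] at hJ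
  eventually_eq := by
    have hneg : Tendsto (fun p : ℝ × ℝ => (p.1, -p.2)) (𝓝 (t, -z)) (𝓝 (t, z)) :=
      Continuous.tendsto' (by fun_prop) _ _ (by simp)
    filter_upwards [hneg.eventually h.eventually_eq] with p hp
    simpa only [neg_neg, neg_add_rev, mul_neg, add_comm] using hp

theorem IsEntropySolution.mono (h : IsEntropySolution u₀ g u φ τ δ) (hτ : τ' ≤ τ) (hδ : δ' ≤ δ) :
    IsEntropySolution u₀ g u φ τ' δ' where
  eq_of_le_one t ht x z hx hz :=
    h.eq_of_le_one t ⟨by linarith [ht.1], ht.2⟩ x z (hx.trans_le hδ) (hz.trans_le hδ)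
  eq_of_lt_shock t ht x z hx hz :=
    h.eq_of_lt_shock t ⟨ht.1, by linarith [ht.2]⟩ x z (hx.trans_le hδ) ⟨by linarith [hz.1], hz.2⟩
  eq_of_shock_lt t ht x z hx hz :=
    h.eq_of_shock_lt t ⟨ht.1, by linarith [ht.2]⟩ x z (hx.trans_le hδ) ⟨hz.1, hz.2.trans_le hδ⟩

end Reflection

section ShockCurve

variable {n : ℕ} {f u₀ g φ : ℝ → ℝ} {ε η τ δ t x a b σ M : ℝ}

theorem IsShock.exists_localization (hs : IsShock f u₀ g φ τ δ) (hg : CuspProfile n g ε η)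
    (hM : ∀ z, |g z| ≤ M) (hτ : 0 < τ) :
    ∃ τ', 0 < τ' ∧ τ' ≤ τ ∧ τ' ≤ 1 ∧ IsShock f u₀ g φ τ' η := by
  have hsmall : ∀ᶠ t in 𝓝[≥] 1, |t - 1| * M + |φ t| < η ^ (n + 1) / 2 := by
    have hcont : ContinuousWithinAt φ (Ici 1) 1 :=
      (hs.continuousOn 1 (left_mem_Ico.2 (by linarith))).mono_of_mem_nhdsWithin
        (Ico_mem_nhdsGE (by linarith))
    have hlim : Tendsto (fun t => |t - 1| * M + |φ t|) (𝓝[≥] 1) (𝓝 (|1 - 1| * M + |φ 1|)) :=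
      ((continuous_id.sub continuous_const).abs.mul continuous_const).continuousWithinAt.add
        hcont.abs
    refine hlim.eventually_lt_const ?_
    rw [hs.apply_one, sub_self, abs_zero, zero_mul, add_zero]
    exact half_pos (pow_pos hg.pos _)
  obtain ⟨T, hT, hsub⟩ := (mem_nhdsGE_iff_exists_Ico_subset' (lt_add_one 1)).1 hsmall
  have hT₀ : 1 < T := hT
  refine ⟨min (min τ 1) (T - 1), lt_min (lt_min hτ one_pos) (by linarith),
    (min_le_left _ _).trans (min_le_left _ _), (min_le_left _ _).trans (min_le_right _ _),
    hs.apply_one, hs.continuousOn.mono (Ico_subset_Ico_right ?_), fun t ht => ?_⟩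
  · gcongr; exact (min_le_left _ _).trans (min_le_left _ _)
  · have ht' := lt_min_iff.1 (sub_lt_iff_lt_add'.2 ht.2)
    obtain ⟨a, ha, b, hb, hroota, hrootb, hder⟩ :=
      hs.exists_roots t ⟨ht.1, by linarith [(lt_min_iff.1 ht'.1).1]⟩
    have hφt := hsub ⟨ht.1.le, by linarith [ht'.2]⟩
    exact ⟨a, ⟨(abs_lt.1 (hg.abs_root_lt (hM a) hφt hroota.1)).1, ha.2⟩,
      b, ⟨hb.1, (abs_lt.1 (hg.abs_root_lt (hM b) hφt hrootb.1)).2⟩, hroota, hrootb, hder⟩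

theorem CuspDatum.shockSpeed_le (hd : CuspDatum n f u₀ g ε η) (ht : 1 ≤ t) (hσ : 0 ≤ σ)
    (hσn : σ ^ n = t - 1) (ha : a ∈ Ioo (-η) 0) (hb : b ∈ Ioo 0 η) (hax : a + t * g a = x)
    (hbx : b + t * g b = x) (hx : 0 ≤ x) :
    (f (u₀ b) - f (u₀ a)) / (u₀ b - u₀ a) ≤ 40 * ε * σ := by
  have hε := hd.eps_pos
  have hmem : ∀ z ∈ Icc a b, |z| ≤ η := fun z hz =>
    abs_le.2 ⟨by linarith [ha.1, hz.1], by linarith [hb.2, hz.2]⟩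
  have hspeed := (abs_le.1 <| abs_shockSpeed_add_midpoint_le (F := fun z => f (u₀ z))
    hd.deriv_ne_zero ha.2 hb.1 (by positivity : 0 ≤ 2 * ε) (by linarith [hd.eps_le_eighth])
    hd.differentiable_datum hd.hasDerivAt_flux (fun z hz => hd.abs_deriv_sub_le z (hmem z hz))
    fun z hz => hd.abs_add_self_le_mul (hmem z hz)).2
  have hmid : -(a + b) ≤ 4 * ε * (b - a) := by
    nlinarith [hd.neg_left_root_le (by linarith) ha hb hax hbx hx, ha.2]
  have hdist : ε * (b - a) ≤ ε * (4 * σ) := by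
    gcongr; exact hd.root_dist_le ht hσ hσn ha hb hax hbx
  linarith

theorem IsShock.le_mul_rpow (hs : IsShock f u₀ g φ τ η) (hd : CuspDatum n f u₀ g ε η)
    (ht : t ∈ Ioo 1 (1 + τ)) : φ t ≤ 40 * ε * (t - 1) ^ ((n : ℝ)⁻¹) * (t - 1) := by
  have hε := hd.eps_pos
  have ht₀ : 0 ≤ t - 1 := by linarith [ht.1]
  have hsub : Ioo 1 t ⊆ Ioo 1 (1 + τ) := Ioo_subset_Ioo_right ht.2.le
  refine le_mul_sub_of_deriv_le_of_pos (φ' := deriv φ) (by positivity) ht.1.le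
    (hs.continuousOn.mono (Icc_subset_Ico_right ht.2)) (fun s hs' => ?_) (fun s hs' hpos => ?_)
    hs.apply_one.le
  · obtain ⟨_, -, _, -, -, -, hder⟩ := hs.exists_roots s (hsub hs')
    exact hder.differentiableAt.hasDerivAt
  · obtain ⟨a, ha, b, hb, hroota, hrootb, hder⟩ := hs.exists_roots s (hsub hs')
    have hs₀ : 0 ≤ s - 1 := by linarith [hs'.1]
    calc deriv φ s ≤ 40 * ε * (s - 1) ^ ((n : ℝ)⁻¹) := by
          rw [hder.deriv]
          exact hd.shockSpeed_le hs'.1.le (by positivity) (rpow_inv_natCast_pow hs₀ hd.ne_zero)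
            ha hb hroota.1 hrootb.1 hpos.le
      _ ≤ 40 * ε * (t - 1) ^ ((n : ℝ)⁻¹) := by gcongr; exact hs'.2.le

theorem IsShock.exists_pos_root (hs : IsShock f u₀ g φ τ η) (hd : CuspDatum n f u₀ g ε η)
    (hτ : τ ≤ 1) (ht : t ∈ Ico 1 (1 + τ)) :
    ∃ b ∈ Ico 0 η, b + t * g b = φ t ∧ 3 / 4 * (t - 1) ≤ t * b ^ n := by
  rcases ht.1.eq_or_lt with rfl | ht1
  · refine ⟨0, left_mem_Ico.2 hd.pos, ?_, by simp [hd.ne_zero]⟩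
    rw [hs.apply_one, hd.apply_zero, mul_zero, add_zero]
  obtain ⟨-, -, b, hb, -, hroot, -⟩ := hs.exists_roots t ⟨ht1, ht.2⟩
  have hlower := hs.reflect.le_mul_rpow hd.reflect ⟨ht1, ht.2⟩
  refine ⟨b, Ioo_subset_Ico_self hb, hroot.1, hd.outer_root_pow_ge ht.1 (by linarith [ht.2])
    (rpow_inv_natCast_pow (sub_nonneg.2 ht.1) hd.ne_zero) (by linarith [hd.eps_pos])
    (by linarith [hd.eps_le]) hb hroot.1 hroot.2 (neg_le.2 hlower)⟩

end ShockCurve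

section RegularFoot

variable {n : ℕ} {f u₀ g φ : ℝ → ℝ} {u : ℝ → ℝ → ℝ} {ε η τ t x z M : ℝ}

theorem IsEntropySolution.exists_isRegularFoot_of_lt_one (hu : IsEntropySolution u₀ g u φ τ η)
    (hg : CuspProfile n g ε η) (hM : ∀ z, |g z| ≤ M) (ht : 1 / 2 ≤ t) (htτ : 1 - τ < t)
    (ht1 : t < 1) (hx : |x| < η) (hsmall : |t - 1| * M + |x| < η ^ (n + 1) / 2) :
    ∃ z, |z| < η ∧ IsRegularFoot n u₀ g u t x z := by
  obtain ⟨z, hz, rfl⟩ := hg.exists_root hM hsmall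
  refine ⟨z, hz, rfl, hg.jacobian_ge_of_le_one ht ht1.le hz.le, ?_⟩
  have hg' := hg.differentiable.continuous
  have htime : ∀ᶠ p : ℝ × ℝ in 𝓝 (t, z), p.1 ∈ Ioo (1 - τ) 1 :=
    continuous_fst.continuousAt.eventually_mem (Ioo_mem_nhds htτ ht1)
  have hfoot : ∀ᶠ p : ℝ × ℝ in 𝓝 (t, z), |p.2| < η :=
    continuous_snd.abs.continuousAt.eventually_lt_const hz
  have hchar : Continuous fun p : ℝ × ℝ => |p.2 + p.1 * g p.2| := by fun_prop
  have hpos : ∀ᶠ p : ℝ × ℝ in 𝓝 (t, z), |p.2 + p.1 * g p.2| < η :=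
    hchar.continuousAt.eventually_lt_const hx
  filter_upwards [htime, hfoot, hpos] with p htime hfoot hpos
  exact hu.eq_of_le_one _ (Ioo_subset_Ioc_self htime) _ _ hpos hfoot rfl

theorem IsShock.eventually_lt_characteristic (hs : IsShock f u₀ g φ τ η) (hg : Continuous g)
    (ht : t ∈ Ico 1 (1 + τ)) (hlt : φ t < z + t * g z) :
    ∀ᶠ p : ℝ × ℝ in 𝓝 (t, z), 1 ≤ p.1 → φ p.1 < p.2 + p.1 * g p.2 := by
  have hφ : ContinuousWithinAt φ (Ici 1) t :=
    (hs.continuousOn t ht).mono_of_mem_nhdsWithin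
      (inter_mem_nhdsWithin _ (Iio_mem_nhds ht.2))
  have hφ' : ContinuousWithinAt (fun p : ℝ × ℝ => φ p.1) {p | 1 ≤ p.1} (t, z) :=
    hφ.comp (x := (t, z)) continuousWithinAt_fst fun _ hp => hp
  have hchar : ContinuousWithinAt (fun p : ℝ × ℝ => p.2 + p.1 * g p.2) {p | 1 ≤ p.1} (t, z) := by
    fun_prop
  exact eventually_nhdsWithin_iff.1 (hφ'.eventually_lt hchar hlt)

theorem IsEntropySolution.exists_isRegularFoot_of_shock_lt (hu : IsEntropySolution u₀ g u φ τ η)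
    (hs : IsShock f u₀ g φ τ η) (hd : CuspDatum n f u₀ g ε η) (hM : ∀ z, |g z| ≤ M) (hτ : τ ≤ 1)
    (ht : t ∈ Ico 1 (1 + τ)) (hx : |x| < η) (hsmall : |t - 1| * M + |x| < η ^ (n + 1) / 2)
    (hφx : φ t < x) : ∃ z, |z| < η ∧ IsRegularFoot n u₀ g u t x z := by
  obtain ⟨b, hb, hroot, hgap⟩ := hs.exists_pos_root hd hτ ht
  obtain ⟨z, hz, rfl⟩ := hd.exists_root_gt (hM η) hsmall hb.2.le (hroot.trans_lt hφx)
  have hz₀ : 0 < z := hb.1.trans_lt hz.1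
  have hzη : |z| < η := by rw [abs_of_pos hz₀]; exact hz.2
  have hJ : (|t - 1| + z ^ n) / 6 ≤ 1 + t * deriv g z := by
    have ht₀ : 0 ≤ t := zero_le_one.trans ht.1
    refine hd.jacobian_ge_of_one_le ht.1 hzη.le (hgap.trans ?_)
    gcongr
    exacts [hb.1, hz.1.le]
  have hJpos : 0 < 1 + t * deriv g z := lt_of_lt_of_le (by positivity) hJ
  refine ⟨z, hzη, rfl, hJ, ?_⟩
  have hg := hd.differentiable.continuous
  have hg' := hd.contDiff.continuous_deriv_one
  have htime : ∀ᶠ p : ℝ × ℝ in 𝓝 (t, z), p.1 ∈ Ioo (1 - τ) (1 + τ) :=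
    continuous_fst.continuousAt.eventually_mem (Ioo_mem_nhds (by linarith [ht.1, ht.2]) ht.2)
  have hfoot : ∀ᶠ p : ℝ × ℝ in 𝓝 (t, z), p.2 ∈ Ioo 0 η :=
    continuous_snd.continuousAt.eventually_mem (Ioo_mem_nhds hz₀ hz.2)
  have hchar : Continuous fun p : ℝ × ℝ => |p.2 + p.1 * g p.2| := by fun_prop
  have hpos : ∀ᶠ p : ℝ × ℝ in 𝓝 (t, z), |p.2 + p.1 * g p.2| < η :=
    hchar.continuousAt.eventually_lt_const hx
  have hjacobian : Continuous fun p : ℝ × ℝ => 1 + p.1 * deriv g p.2 := by fun_prop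
  have hjac : ∀ᶠ p : ℝ × ℝ in 𝓝 (t, z), 0 < 1 + p.1 * deriv g p.2 :=
    hjacobian.continuousAt.eventually_const_lt hJpos
  filter_upwards [htime, hfoot, hpos, hjac, hs.eventually_lt_characteristic hg ht hφx]
    with p htime hfoot hpos hjac hshock
  rcases le_or_gt p.1 1 with hp | hp
  · refine hu.eq_of_le_one _ ⟨htime.1, hp⟩ _ _ hpos ?_ rfl
    rw [abs_of_pos hfoot.1]; exact hfoot.2
  · exact hu.eq_of_shock_lt _ ⟨hp, htime.2⟩ _ _ hpos hfoot ⟨rfl, hjac.le⟩ (hshock hp.le)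

theorem IsEntropySolution.exists_isRegularFoot_of_lt_shock (hu : IsEntropySolution u₀ g u φ τ η)
    (hs : IsShock f u₀ g φ τ η) (hd : CuspDatum n f u₀ g ε η) (hM : ∀ z, |g z| ≤ M) (hτ : τ ≤ 1)
    (ht : t ∈ Ico 1 (1 + τ)) (hx : |x| < η) (hsmall : |t - 1| * M + |x| < η ^ (n + 1) / 2)
    (hxφ : x < φ t) : ∃ z, |z| < η ∧ IsRegularFoot n u₀ g u t x z := by
  obtain ⟨z, hz, hfoot⟩ := hu.reflect.exists_isRegularFoot_of_shock_lt hs.reflect hd.reflect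
    (fun z => by rw [abs_neg]; exact hM _) hτ ht (x := -x) (by rwa [abs_neg]) (by rwa [abs_neg])
    (neg_lt_neg hxφ)
  refine ⟨-z, by rwa [abs_neg], ?_⟩
  simpa only [neg_neg] using hfoot.of_reflect hd.even

theorem IsEntropySolution.eventually_exists_isRegularFoot (hu : IsEntropySolution u₀ g u φ τ η)
    (hs : IsShock f u₀ g φ τ η) (hd : CuspDatum n f u₀ g ε η) (hM : ∀ z, |g z| ≤ M)
    (hτ₀ : 0 < τ) (hτ : τ ≤ 1) :
    ∀ᶠ q : ℝ × ℝ in 𝓝 (1, 0), ¬(1 ≤ q.1 ∧ q.2 = φ q.1) →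
      ∃ z, |z| < η ∧ IsRegularFoot n u₀ g u q.1 q.2 z := by
  have htime : ∀ᶠ q : ℝ × ℝ in 𝓝 (1, 0), q.1 ∈ Ioo (max (1 / 2) (1 - τ)) (1 + τ) :=
    continuous_fst.continuousAt.eventually_mem
      (Ioo_mem_nhds (max_lt (by norm_num) (by linarith)) (by linarith))
  have hpos : ∀ᶠ q : ℝ × ℝ in 𝓝 (1, 0), |q.2| < η :=
    continuous_snd.abs.continuousAt.eventually_lt_const (by simpa using hd.pos)
  have hcont : Continuous fun q : ℝ × ℝ => |q.1 - 1| * M + |q.2| := by fun_prop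
  have hsmall : ∀ᶠ q : ℝ × ℝ in 𝓝 (1, 0), |q.1 - 1| * M + |q.2| < η ^ (n + 1) / 2 :=
    hcont.continuousAt.eventually_lt_const (by simpa using pow_pos hd.pos (n + 1))
  filter_upwards [htime, hpos, hsmall] with q htime hpos hsmall hq
  obtain ⟨hhalf, hτq⟩ := max_lt_iff.1 htime.1
  rcases lt_or_ge q.1 1 with ht1 | ht1
  · exact hu.exists_isRegularFoot_of_lt_one hd.toCuspProfile hM hhalf.le hτq ht1 hpos hsmall
  rcases lt_or_gt_of_ne fun heq => hq ⟨ht1, heq⟩ with hlt | hgt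
  · exact hu.exists_isRegularFoot_of_lt_shock hs hd hM hτ ⟨ht1, htime.2⟩ hpos hsmall hlt
  · exact hu.exists_isRegularFoot_of_shock_lt hs hd hM hτ ⟨ht1, htime.2⟩ hpos hsmall hgt

end RegularFoot

section Estimates

variable {n : ℕ} {f u₀ g φ : ℝ → ℝ} {u : ℝ → ℝ → ℝ} {ε η τ δ t x z M : ℝ}

theorem CuspDatum.abs_deriv_datum_le (hd : CuspDatum n f u₀ g ε η) (hz : |z| ≤ η) :
    |deriv u₀ z| ≤ 2 * |deriv u₀ 0| := by
  have htri := abs_sub_abs_le_abs_sub (deriv u₀ z) (deriv u₀ 0)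
  nlinarith [hd.abs_deriv_sub_le z hz, abs_nonneg (deriv u₀ 0), hd.eps_le_eighth]

theorem CuspDatum.abs_datum_sub_le (hd : CuspDatum n f u₀ g ε η) (hz : |z| ≤ η) :
    |u₀ z - u₀ 0| ≤ 2 * |deriv u₀ 0| * |z| := by
  have hbound := (convex_Icc (-η) η).norm_image_sub_le_of_norm_deriv_le (f := u₀)
    (fun w _ => hd.differentiable_datum w) (fun w hw => hd.abs_deriv_datum_le (abs_le.2 hw))
    (abs_le.1 (abs_zero.trans_le hd.pos.le)) (abs_le.1 hz)
  rwa [sub_zero] at hbound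

theorem IsRegularFoot.abs_le_blowupScale (hfoot : IsRegularFoot n u₀ g u t x z)
    (hg : CuspProfile n g ε η) (ht : 1 / 2 ≤ t) (hz : |z| ≤ η) : |z| ≤ 8 * blowupScale n t x := by
  refine abs_root_le_blowupScale hg.ne_zero ht (le_trans ?_ (hg.le_abs_add_self hz)) hfoot.root
  gcongr
  linarith [hg.eps_le_eighth]

theorem IsRegularFoot.inv_jacobian_le (hfoot : IsRegularFoot n u₀ g u t x z)
    (hg : CuspProfile n g ε η) (ht : t ∈ Icc 0 2) (hz : |z| ≤ η) (htx : (t, x) ≠ (1, 0)) :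
    0 < 1 + t * deriv g z ∧
      (1 + t * deriv g z)⁻¹ ≤ 6 ^ (n + 1) * (blowupScale n t x ^ n)⁻¹ := by
  have hρ := pow_pos (blowupScale_pos htx (n := n)) n
  have hrem : |g z + z| ≤ 2 * |z| ^ (n + 1) :=
    (hg.abs_add_self_le hz).trans (by gcongr; linarith [hg.eps_le_eighth])
  have hpow := blowupScale_pow_le ht.1 ht.2 hg.ne_zero hrem hfoot.root
  rw [hg.even.pow_abs] at hpow
  have hJ : blowupScale n t x ^ n / 6 ^ (n + 1) ≤ 1 + t * deriv g z :=
    calc blowupScale n t x ^ n / 6 ^ (n + 1)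
        ≤ 6 ^ n * (|t - 1| + z ^ n) / 6 ^ (n + 1) := by gcongr
      _ = (|t - 1| + z ^ n) / 6 := by rw [pow_succ]; field_simp
      _ ≤ 1 + t * deriv g z := hfoot.jacobian_ge
  refine ⟨lt_of_lt_of_le (by positivity) hJ, (inv_anti₀ (by positivity) hJ).trans_eq ?_⟩
  rw [inv_div, div_eq_mul_inv]

theorem IsRegularFoot.hasDerivAt (hfoot : IsRegularFoot n u₀ g u t x z) (hg : ContDiff ℝ 1 g)
    (hu₀ : Differentiable ℝ u₀) (hJ : 0 < 1 + t * deriv g z) :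
    HasDerivAt (fun s => u s x) (deriv u₀ z * (-g z / (1 + t * deriv g z))) t ∧
      HasDerivAt (u t) (deriv u₀ z * (1 / (1 + t * deriv g z))) x := by
  have hg' : HasStrictDerivAt g (deriv g z) z :=
    hg.contDiffAt.hasStrictDerivAt one_ne_zero
  simpa only [hfoot.root] using
    hasDerivAt_of_const_along_characteristics hg' (hu₀ z).hasDerivAt hJ.ne' hfoot.eventually_eq

theorem IsRegularFoot.abs_sub_le (hfoot : IsRegularFoot n u₀ g u t x z)
    (hd : CuspDatum n f u₀ g ε η) (ht : 1 / 2 ≤ t) (hz : |z| ≤ η) :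
    |u t x - u₀ 0| ≤ 16 * |deriv u₀ 0| * blowupScale n t x :=
  calc |u t x - u₀ 0| = |u₀ z - u₀ 0| := by
        rw [← hfoot.eventually_eq.self_of_nhds, hfoot.root]
    _ ≤ 2 * |deriv u₀ 0| * |z| := hd.abs_datum_sub_le hz
    _ ≤ 2 * |deriv u₀ 0| * (8 * blowupScale n t x) := by
        gcongr; exact hfoot.abs_le_blowupScale hd.toCuspProfile ht hz
    _ = 16 * |deriv u₀ 0| * blowupScale n t x := by ring

theorem IsRegularFoot.abs_deriv_space_le (hfoot : IsRegularFoot n u₀ g u t x z)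
    (hd : CuspDatum n f u₀ g ε η) (ht : t ∈ Icc 0 2) (hz : |z| ≤ η) (htx : (t, x) ≠ (1, 0)) :
    |deriv (u t) x| ≤ 2 * 6 ^ (n + 1) * |deriv u₀ 0| * (blowupScale n t x ^ n)⁻¹ := by
  obtain ⟨hJ, hJinv⟩ := hfoot.inv_jacobian_le hd.toCuspProfile ht hz htx
  rw [(hfoot.hasDerivAt hd.contDiff hd.differentiable_datum hJ).2.deriv]
  calc |deriv u₀ z * (1 / (1 + t * deriv g z))| = |deriv u₀ z| * (1 + t * deriv g z)⁻¹ := by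
        rw [abs_mul, one_div, abs_of_pos (inv_pos.2 hJ)]
    _ ≤ 2 * |deriv u₀ 0| * (6 ^ (n + 1) * (blowupScale n t x ^ n)⁻¹) := by
        gcongr; exact hd.abs_deriv_datum_le hz
    _ = 2 * 6 ^ (n + 1) * |deriv u₀ 0| * (blowupScale n t x ^ n)⁻¹ := by ring

theorem IsRegularFoot.abs_deriv_time_le (hfoot : IsRegularFoot n u₀ g u t x z)
    (hd : CuspDatum n f u₀ g ε η) (ht : t ∈ Icc (1 / 2) 2) (hz : |z| ≤ η)
    (htx : (t, x) ≠ (1, 0)) :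
    |deriv (fun s => u s x) t| ≤
      32 * 6 ^ (n + 1) * |deriv u₀ 0| * (blowupScale n t x ^ (n - 1))⁻¹ := by
  have ht₀ : t ∈ Icc 0 2 := ⟨by linarith [ht.1], ht.2⟩
  obtain ⟨hJ, hJinv⟩ := hfoot.inv_jacobian_le hd.toCuspProfile ht₀ hz htx
  have hρ := blowupScale_pos htx (n := n)
  have hgz : |g z| ≤ 2 * |z| := by
    have htri := abs_sub_abs_le_abs_sub (g z) (-z)
    rw [sub_neg_eq_add, abs_neg] at htri
    nlinarith [hd.abs_add_self_le_mul hz, abs_nonneg z, hd.eps_le_eighth]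
  rw [(hfoot.hasDerivAt hd.contDiff hd.differentiable_datum hJ).1.deriv]
  calc |deriv u₀ z * (-g z / (1 + t * deriv g z))|
      = |deriv u₀ z| * (|g z| * (1 + t * deriv g z)⁻¹) := by
        rw [abs_mul, div_eq_mul_inv, abs_mul, abs_neg, abs_of_pos (inv_pos.2 hJ)]
    _ ≤ 2 * |deriv u₀ 0| *
        (2 * (8 * blowupScale n t x) * (6 ^ (n + 1) * (blowupScale n t x ^ n)⁻¹)) := by
        gcongr
        · exact hd.abs_deriv_datum_le hz
        · exact hgz.trans (by gcongr; exact hfoot.abs_le_blowupScale hd.toCuspProfile ht.1 hz)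
    _ = 32 * 6 ^ (n + 1) * |deriv u₀ 0| * (blowupScale n t x ^ (n - 1))⁻¹ := by
        rw [← pow_sub_one_mul hd.ne_zero (blowupScale n t x)]
        field_simp
        ring

theorem IsEntropySolution.isBigO_blowupScale (hu : IsEntropySolution u₀ g u φ τ δ)
    (hs : IsShock f u₀ g φ τ δ) (hd : CuspDatum n f u₀ g ε η) (hM : ∀ z, |g z| ≤ M)
    (hτ : 0 < τ) (hη : η ≤ δ) :
    letI l : Filter (ℝ × ℝ) := 𝓝[{q | ¬(1 ≤ q.1 ∧ q.2 = φ q.1)}] (1, 0)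
    ((fun q => u q.1 q.2 - u 1 0) =O[l] fun q => blowupScale n q.1 q.2) ∧
      ((fun q => deriv (fun t => u t q.2) q.1) =O[l]
        fun q => (blowupScale n q.1 q.2 ^ (n - 1))⁻¹) ∧
      ((fun q => deriv (fun x => u q.1 x) q.2) =O[l]
        fun q => (blowupScale n q.1 q.2 ^ n)⁻¹) := by
  obtain ⟨τ', hτ', hττ', hτ1, hs'⟩ := hs.exists_localization hd.toCuspProfile hM hτ
  have hu' := hu.mono hττ' hη
  have hu10 : u 1 0 = u₀ 0 := hu'.eq_of_le_one 1 ⟨by linarith, le_rfl⟩ 0 0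
    (by simpa using hd.pos) (by simpa using hd.pos) (by simp [hd.apply_zero])
  have hfoot : ∀ᶠ q : ℝ × ℝ in 𝓝[{q | ¬(1 ≤ q.1 ∧ q.2 = φ q.1)}] (1, 0), q ≠ (1, 0) ∧
      q.1 ∈ Icc (1 / 2) 2 ∧ ∃ z, |z| ≤ η ∧ IsRegularFoot n u₀ g u q.1 q.2 z := by
    have htime : ∀ᶠ q : ℝ × ℝ in 𝓝 (1, 0), q.1 ∈ Icc (1 / 2) 2 :=
      continuous_fst.continuousAt.eventually_mem (Icc_mem_nhds (by norm_num) (by norm_num))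
    rw [eventually_nhdsWithin_iff]
    filter_upwards [htime, hu'.eventually_exists_isRegularFoot hs' hd hM hτ' hτ1]
      with q htime hex hq
    obtain ⟨z, hz, hfoot⟩ := hex hq
    refine ⟨?_, htime, z, hz.le, hfoot⟩
    rintro rfl
    exact hq ⟨le_rfl, hs.apply_one.symm⟩
  refine ⟨.of_bound (16 * |deriv u₀ 0|) ?_, .of_bound (32 * 6 ^ (n + 1) * |deriv u₀ 0|) ?_,
    .of_bound (2 * 6 ^ (n + 1) * |deriv u₀ 0|) ?_⟩ <;>
    filter_upwards [hfoot] with q ⟨hq, ht, z, hz, hfoot⟩ <;>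
    have hρ := blowupScale_pos hq (n := n)
  · rw [norm_eq_abs, norm_of_nonneg hρ.le, hu10]
    exact hfoot.abs_sub_le hd ht.1 hz
  · rw [norm_eq_abs, norm_of_nonneg (by positivity)]
    exact hfoot.abs_deriv_time_le hd ht hz hq
  · rw [norm_eq_abs, norm_of_nonneg (by positivity)]
    exact hfoot.abs_deriv_space_le hd ⟨by linarith [ht.1], ht.2⟩ hz hq

end Estimates

section FiniteDegeneracy

variable {k : ℕ} {f u₀ g : ℝ → ℝ} {e : ℝ}

theorem eventually_abs_le_mul_pow_of_isBigO {v : ℝ → ℝ} {m : ℕ} (he : 0 < e)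
    (hv : v =O[𝓝 0] fun x => x ^ (m + 1)) : ∀ᶠ z in 𝓝 0, |v z| ≤ e * |z| ^ m := by
  filter_upwards [(hv.trans_isLittleO (isLittleO_pow_pow m.lt_succ_self)).def he] with z hz
  rwa [norm_pow] at hz

theorem AssumptionA.eventually_abs_remainder_le (hA : AssumptionA k g) (he : 0 < e) :
    ∀ᶠ z in 𝓝 0, |g z + z - z ^ (2 * k + 1)| ≤ e * |z| ^ (2 * k + 1) ∧
      |deriv g z + 1 - ((2 * k : ℕ) + 1) * z ^ (2 * k)| ≤ e * z ^ (2 * k) := by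
  obtain ⟨-, -, -, -, -, r, hr, hgr, hO⟩ := hA
  have hrem := eventually_abs_le_mul_pow_of_isBigO he (m := 2 * k + 1) (by simpa using hO 0)
  have hrem' := eventually_abs_le_mul_pow_of_isBigO he (v := deriv r) (m := 2 * k)
    (by simpa using hO 1)
  filter_upwards [hrem, hrem', hgr.eventually_nhds] with z hz hz' hgz
  refine ⟨?_, ?_⟩
  · rwa [hgz.self_of_nhds, show -z + z ^ (2 * k + 1) + r z + z - z ^ (2 * k + 1) = r z by ring]
  · have hder := ((hasDerivAt_neg z).add (hasDerivAt_pow (2 * k + 1) z)).add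
      (hr.differentiable (by simp) z).hasDerivAt
    rw [(even_two_mul k).pow_abs] at hz'
    rw [(hder.congr_of_eventuallyEq hgz).deriv]
    convert hz' using 2
    push_cast [Nat.add_sub_cancel]
    ring

theorem AssumptionA.deriv_datum_ne_zero (hA : AssumptionA k g) (hf : ContDiff ℝ 2 f)
    (hu₀ : Differentiable ℝ u₀) (hg : ∀ x, g x = deriv f (u₀ x)) : deriv u₀ 0 ≠ 0 := by
  have hchain : deriv g 0 = deriv (deriv f) (u₀ 0) * deriv u₀ 0 := by
    rw [funext hg]
    exact deriv_comp 0 (hf.differentiable_deriv_two _) (hu₀ 0)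
  intro h0
  simp [hA.2.2.2.1, h0] at hchain

theorem AssumptionA.exists_cuspDatum {δ : ℝ} (hA : AssumptionA k g) (hf : ContDiff ℝ 2 f)
    (hu₀ : ContDiff ℝ 1 u₀) (hg : ∀ x, g x = deriv f (u₀ x)) (hδ : 0 < δ) :
    ∃ ε η, η ≤ δ ∧ CuspDatum (2 * k) f u₀ g ε η := by
  have hk := hA.1
  have hu₀' : Differentiable ℝ u₀ := hu₀.differentiable one_ne_zero
  have hc := hA.deriv_datum_ne_zero hf hu₀' hg
  obtain ⟨ε, hε₀, hε⟩ : ∃ ε : ℝ, 0 < ε ∧ 640 * ((2 * k : ℕ) + 2) * ε ≤ 1 :=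
    ⟨(640 * ((2 * k : ℕ) + 2))⁻¹, by positivity, (mul_inv_cancel₀ (by positivity)).le⟩
  have hslope : ∀ᶠ z in 𝓝 0, |deriv u₀ z - deriv u₀ 0| < 2 * ε * |deriv u₀ 0| :=
    (hu₀.continuous_deriv_one.sub continuous_const).abs.continuousAt.eventually_lt_const
      (by simp only [Pi.sub_apply, sub_self, abs_zero]; positivity)
  have hpow : ∀ᶠ z : ℝ in 𝓝 0, z ^ (2 * k) < ε :=
    (continuous_pow (2 * k)).continuousAt.eventually_lt_const
      ((zero_pow (by omega)).trans_lt hε₀)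
  obtain ⟨r, hr, hball⟩ := Metric.eventually_nhds_iff.1
    ((hA.eventually_abs_remainder_le hε₀).and (hslope.and hpow))
  have hη : 0 < min (r / 2) δ := lt_min (half_pos hr) hδ
  have hmem : ∀ z, |z| ≤ min (r / 2) δ → dist z 0 < r := fun z hz => by
    rw [Real.dist_0_eq_abs]; linarith [min_le_left (r / 2) δ]
  exact ⟨ε, min (r / 2) δ, min_le_right _ _,
    { even := even_two_mul k
      ne_zero := by omega
      eps_pos := hε₀
      eps_le := hε
      pos := hη
      pow_le := (hball (hmem _ (abs_of_pos hη).le)).2.2.le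
      contDiff := hA.2.1.of_le (by norm_cast; omega)
      neg_one_le_deriv := hA.2.2.2.2.1
      abs_remainder_le := fun z hz => (hball (hmem z hz)).1.1
      abs_deriv_remainder_le := fun z hz => (hball (hmem z hz)).1.2
      differentiable_datum := hu₀'
      deriv_ne_zero := hc
      abs_deriv_sub_le := fun z hz => (hball (hmem z hz)).2.1.le
      hasDerivAt_flux := fun z => by
        rw [hg]
        exact ((hf.differentiable two_ne_zero _).hasDerivAt).comp z (hu₀' z).hasDerivAt }⟩

end FiniteDegeneracy

/-- Under (A_k), for the entropy solution `u` built from the characteristic roots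
(`u = u₀(y(t,x))` for `t ≤ 1`, `u = u₀(y₋(t,x))` left of the shock and `u = u₀(y₊(t,x))`
right of the shock for `t > 1`), one has, in a punctured neighbourhood of the blowup
point `(1,0)` excluding the shock curve `{(t, φ(t)) : t ≥ 1}`:
`|u(t,x) - u(1,0)| = O(|t-1|^{1/(2k)} + |x|^{1/(2k+1)})`,
`|∂_t u(t,x)| = O((|t-1|^{1/(2k)} + |x|^{1/(2k+1)})^{-(2k-1)})`,
`|∂_x u(t,x)| = O((|t-1|^{1/(2k)} + |x|^{1/(2k+1)})^{-2k})`. -/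
theorem statement1 (k : ℕ) (f u0 g : ℝ → ℝ)
    (hf : ContDiff ℝ 2 f) (hu0 : ContDiff ℝ 1 u0)
    (hgdef : ∀ x, g x = deriv f (u0 x)) (hA : AssumptionA k g)
    (ε₀ δ₀ : ℝ) (hε₀ : 0 < ε₀) (hδ₀ : 0 < δ₀)
    (u : ℝ → ℝ → ℝ) (y ym yp : ℝ → ℝ → ℝ) (φ : ℝ → ℝ)
    -- the characteristic roots: y (t ≤ 1), y₋, y₊ (t > 1)
    (hy : ∀ t x z : ℝ, 1 - ε₀ < t → t ≤ 1 → z + t * g z = x → |z| < δ₀ → y t x = z)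
    (hyp : ∀ t x z : ℝ, 1 < t → t < 1 + ε₀ → z + t * g z = x → 0 < z → z < δ₀ →
      0 ≤ 1 + t * deriv g z → yp t x = z)
    (hym : ∀ t x z : ℝ, 1 < t → t < 1 + ε₀ → z + t * g z = x → -δ₀ < z → z < 0 →
      0 ≤ 1 + t * deriv g z → ym t x = z)
    -- the shock curve issuing from (1,0), solving the Rankine–Hugoniot ODE
    (hφ1 : φ 1 = 0) (hφc : ContinuousOn φ (Ico (1 : ℝ) (1 + ε₀)))
    (hφroots : ∀ t ∈ Ioo (1 : ℝ) (1 + ε₀),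
      (∃ z, z + t * g z = φ t ∧ 0 < z ∧ z < δ₀ ∧ 0 ≤ 1 + t * deriv g z) ∧
      (∃ z, z + t * g z = φ t ∧ -δ₀ < z ∧ z < 0 ∧ 0 ≤ 1 + t * deriv g z))
    (hφode : ∀ t ∈ Ioo (1 : ℝ) (1 + ε₀),
      HasDerivAt φ ((f (u0 (yp t (φ t))) - f (u0 (ym t (φ t))))
        / (u0 (yp t (φ t)) - u0 (ym t (φ t)))) t)
    -- the entropy solution u
    (hu_le : ∀ t x : ℝ, 1 - ε₀ < t → t ≤ 1 → |x| < δ₀ → u t x = u0 (y t x))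
    (hu_lt : ∀ t x : ℝ, 1 < t → t < 1 + ε₀ → |x| < δ₀ → x < φ t → u t x = u0 (ym t x))
    (hu_gt : ∀ t x : ℝ, 1 < t → t < 1 + ε₀ → |x| < δ₀ → φ t < x → u t x = u0 (yp t x)) :
    -- punctured neighbourhood of (1,0) excluding the shock curve
    ((fun q : ℝ × ℝ => u q.1 q.2 - u 1 0)
        =O[𝓝[{q : ℝ × ℝ | ¬ (1 ≤ q.1 ∧ q.2 = φ q.1)}] ((1 : ℝ), (0 : ℝ))]
      fun q : ℝ × ℝ => |q.1 - 1| ^ ((1 : ℝ) / (2 * (k : ℝ))) + |q.2| ^ ((1 : ℝ) / (2 * (k : ℝ) + 1))) ∧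
    ((fun q : ℝ × ℝ => deriv (fun t => u t q.2) q.1)
        =O[𝓝[{q : ℝ × ℝ | ¬ (1 ≤ q.1 ∧ q.2 = φ q.1)}] ((1 : ℝ), (0 : ℝ))]
      fun q : ℝ × ℝ =>
        (|q.1 - 1| ^ ((1 : ℝ) / (2 * (k : ℝ))) + |q.2| ^ ((1 : ℝ) / (2 * (k : ℝ) + 1)))
          ^ (-(2 * (k : ℝ) - 1))) ∧
    ((fun q : ℝ × ℝ => deriv (fun x => u q.1 x) q.2)
        =O[𝓝[{q : ℝ × ℝ | ¬ (1 ≤ q.1 ∧ q.2 = φ q.1)}] ((1 : ℝ), (0 : ℝ))]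
      fun q : ℝ × ℝ =>
        (|q.1 - 1| ^ ((1 : ℝ) / (2 * (k : ℝ))) + |q.2| ^ ((1 : ℝ) / (2 * (k : ℝ) + 1)))
          ^ (-(2 * (k : ℝ)))) := by
  obtain ⟨M, hM⟩ := hA.2.2.1
  obtain ⟨ε, η, hη, hd⟩ := hA.exists_cuspDatum hf hu0 hgdef hδ₀
  have hs : IsShock f u0 g φ ε₀ δ₀ := ⟨hφ1, hφc, fun t ht => by
    obtain ⟨⟨b, hbx, hb0, hbδ, hbJ⟩, a, hax, haδ, ha0, haJ⟩ := hφroots t ht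
    refine ⟨a, ⟨haδ, ha0⟩, b, ⟨hb0, hbδ⟩, ⟨hax, haJ⟩, ⟨hbx, hbJ⟩, ?_⟩
    rw [← hyp t _ b ht.1 ht.2 hbx hb0 hbδ hbJ, ← hym t _ a ht.1 ht.2 hax haδ ha0 haJ]
    exact hφode t ht⟩
  have hu : IsEntropySolution u0 g u φ ε₀ δ₀ :=
    { eq_of_le_one := fun t ht x z hx hz hzx => by
        rw [hu_le t x ht.1 ht.2 hx, hy t x z ht.1 ht.2 hzx hz]
      eq_of_lt_shock := fun t ht x z hx hz hroot hlt => by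
        rw [hu_lt t x ht.1 ht.2 hx hlt, hym t x z ht.1 ht.2 hroot.1 hz.1 hz.2 hroot.2]
      eq_of_shock_lt := fun t ht x z hx hz hroot hlt => by
        rw [hu_gt t x ht.1 ht.2 hx hlt, hyp t x z ht.1 ht.2 hroot.1 hz.1 hz.2 hroot.2] }
  have hk : ((2 * k - 1 : ℕ) : ℝ) = 2 * (k : ℝ) - 1 := by
    rw [Nat.cast_pred (by have := hA.1; omega)]; push_cast; rfl
  have hk' : ((2 * k : ℕ) : ℝ) = 2 * (k : ℝ) := by push_cast; rfl
  have hpow (t x : ℝ) (m : ℕ) :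
      blowupScale (2 * k) t x ^ (-(m : ℝ)) = (blowupScale (2 * k) t x ^ m)⁻¹ := by
    rw [rpow_neg (blowupScale_nonneg _ _ _), rpow_natCast]
  simp_rw [← blowupScale_two_mul, ← hk, ← hk', hpow]
  exact hu.isBigO_blowupScale hs hd hM hε₀ hη
end

section
/- Under assumption (A_k), there exists ε > 0 sufficiently small such that the root functions η_± belong to C^{2k+1}((1,1+ε)) ∩ C^{1/(2k)}([1,1+ε)) (Hölder continuous with exponent 1/(2k) up to t = 1) and admit, as t → 1+, the expansions η_±(t) = ±(2k+1)^{−1/(2k)}(t−1)^{1/(2k)} − (g^{(2k+2)}(0)/(2k·(2k)!))·(2k+1)^{−(2k+1)/k}·(t−1)^{1/k} + o((t−1)^{1/k}). -/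
open Real Filter Topology Set Asymptotics

/-!
Near its degenerate minimum, `h = g'` satisfies `h(y) = -1 + A yⁿ + B yⁿ⁺¹ + o(yⁿ⁺¹)` with `n = 2k`
and `A > 0`. Along a root `y = η(t)` we have `h(y) = -1/t`, so `t - 1 = -1/h(y) - 1`; this has the
same two leading coefficients as `h(y) + 1`, since the difference is quadratic in
`h(y) + 1 = O(yⁿ)`. Taking `n`-th roots gives a quadratic expansion of `(t - 1)^(1/n)` in `y`,
which is then inverted.

For `y > 0`, the bound `h' ≥ (A/2) n yⁿ⁻¹` integrates to `(A/2) |x - y|ⁿ ≤ |h x - h y|`. Hence there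
is at most one root on each side of `0`, and `η` is Hölder continuous with exponent `1/n`; the
inverse function theorem then gives its smoothness. The negative branch is the positive branch of
`y ↦ h(-y)`, negated.
-/

section Taylor

/-- The coefficient of `y ^ j` in the Taylor expansion of `f` at `0`. -/
noncomputable def taylorCoeff (f : ℝ → ℝ) (j : ℕ) : ℝ :=
  iteratedDeriv j f 0 / j.factorial

lemma taylorCoeff_zero (f : ℝ → ℝ) : taylorCoeff f 0 = f 0 := by
  simp [taylorCoeff]

lemma taylorCoeff_deriv (f : ℝ → ℝ) (j : ℕ) :
    taylorCoeff (deriv f) j = (j + 1) * taylorCoeff f (j + 1) := by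
  rw [taylorCoeff, taylorCoeff, ← iteratedDeriv_succ', Nat.factorial_succ]
  push_cast
  field_simp

lemma taylorCoeff_comp_neg (f : ℝ → ℝ) (j : ℕ) :
    taylorCoeff (fun y => f (-y)) j = (-1) ^ j * taylorCoeff f j := by
  rw [taylorCoeff, taylorCoeff, iteratedDeriv_comp_neg, neg_zero, smul_eq_mul, mul_div_assoc]

lemma sub_sum_taylorCoeff_isLittleO {f : ℝ → ℝ} {m : ℕ} (hf : ContDiffAt ℝ m f 0) :
    (fun y => f y - ∑ j ∈ Finset.range (m + 1), taylorCoeff f j * y ^ j)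
      =o[𝓝 0] fun y => y ^ m := by
  obtain ⟨u, hu, hfu⟩ := hf.contDiffOn le_rfl (by simp)
  obtain ⟨δ, hδ, hsub⟩ := Metric.mem_nhds_iff.1 hu
  have h0 : (0 : ℝ) ∈ Metric.ball (0 : ℝ) δ := Metric.mem_ball_self hδ
  have htaylor := taylor_isLittleO (convex_ball 0 δ) h0 (hfu.mono hsub)
  rw [Metric.isOpen_ball.nhdsWithin_eq h0] at htaylor
  simp only [taylor_within_apply, sub_zero, smul_eq_mul] at htaylor
  refine htaylor.congr_left fun y => ?_
  congr 1
  refine Finset.sum_congr rfl fun j _ => ?_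
  rw [iteratedDerivWithin_of_isOpen Metric.isOpen_ball h0, taylorCoeff]
  ring

/-- `f - f 0` vanishes at `0` to order exactly `n`, with positive leading coefficient; one more
derivative is required so that the next coefficient also enters the Taylor expansion. -/
structure HasPosOrder (f : ℝ → ℝ) (n : ℕ) : Prop where
  contDiffAt : ContDiffAt ℝ (n + 1 : ℕ) f 0
  taylorCoeff_eq_zero : ∀ j, 0 < j → j < n → taylorCoeff f j = 0
  taylorCoeff_pos : 0 < taylorCoeff f n

namespace HasPosOrder

variable {f : ℝ → ℝ} {n : ℕ}

lemma comp_neg (hf : HasPosOrder f n) (hn : Even n) : HasPosOrder (fun y => f (-y)) n where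
  contDiffAt := ContDiffAt.comp (0 : ℝ) (by simpa using hf.contDiffAt) contDiff_neg.contDiffAt
  taylorCoeff_eq_zero j hj hjn := by
    rw [taylorCoeff_comp_neg, hf.taylorCoeff_eq_zero j hj hjn, mul_zero]
  taylorCoeff_pos := by
    rw [taylorCoeff_comp_neg, hn.neg_one_pow, one_mul]
    exact hf.taylorCoeff_pos

lemma sub_isLittleO (hf : HasPosOrder f n) (hn : n ≠ 0) :
    (fun y => f y - f 0 - taylorCoeff f n * y ^ n - taylorCoeff f (n + 1) * y ^ (n + 1))
      =o[𝓝 0] fun y => y ^ (n + 1) := by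
  refine (sub_sum_taylorCoeff_isLittleO hf.contDiffAt).congr_left fun y => ?_
  have hlow : ∑ j ∈ Finset.range n, taylorCoeff f j * y ^ j = f 0 := by
    rw [Finset.sum_eq_single_of_mem 0 (Finset.mem_range.2 (Nat.pos_of_ne_zero hn))
      fun j hj hj0 => by
        rw [hf.taylorCoeff_eq_zero j (Nat.pos_of_ne_zero hj0) (Finset.mem_range.1 hj), zero_mul],
      taylorCoeff_zero, pow_zero, mul_one]
  rw [Finset.sum_range_succ, Finset.sum_range_succ, hlow]
  ring

lemma deriv_sub_isLittleO (hf : HasPosOrder f n) (hn : n ≠ 0) :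
    (fun y => deriv f y - n * taylorCoeff f n * y ^ (n - 1)) =o[𝓝 0] fun y => y ^ (n - 1) := by
  obtain ⟨m, rfl⟩ := Nat.exists_eq_succ_of_ne_zero hn
  have hderiv : ContDiffAt ℝ m (deriv f) 0 :=
    hf.contDiffAt.derivWithin (by norm_cast; omega)
  refine (sub_sum_taylorCoeff_isLittleO hderiv).congr_left fun y => ?_
  rw [Finset.sum_range_succ, Finset.sum_eq_zero fun j hj => by
    rw [taylorCoeff_deriv, hf.taylorCoeff_eq_zero (j + 1) j.succ_pos
      (Nat.succ_lt_succ (Finset.mem_range.1 hj)), mul_zero, zero_mul], taylorCoeff_deriv]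
  push_cast
  simp

lemma eventually_le_deriv (hf : HasPosOrder f n) (hn : n ≠ 0) :
    ∀ᶠ y in 𝓝[>] 0, taylorCoeff f n / 2 * (n * y ^ (n - 1)) ≤ deriv f y := by
  have hcoeff : 0 < n * taylorCoeff f n / 2 := by
    have := hf.taylorCoeff_pos
    positivity
  filter_upwards [((hf.deriv_sub_isLittleO hn).mono nhdsWithin_le_nhds).def hcoeff,
    self_mem_nhdsWithin] with y hy (hpos : 0 < y)
  rw [norm_eq_abs, norm_of_nonneg (by positivity)] at hy
  linarith [neg_le_of_abs_le hy]

end HasPosOrder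

end Taylor

section Monotonicity

lemma mul_sub_pow_le_sub_of_le_deriv {f : ℝ → ℝ} {c x y : ℝ} {n : ℕ} (hn : n ≠ 0) (hc : 0 ≤ c)
    (hx : 0 ≤ x) (hxy : x ≤ y) (hf : ∀ z ∈ Icc x y, DifferentiableAt ℝ f z)
    (hd : ∀ z ∈ Ioo x y, c * (n * z ^ (n - 1)) ≤ deriv f z) :
    c * (y - x) ^ n ≤ f y - f x := by
  have hmono : MonotoneOn (fun z => f z - c * z ^ n) (Icc x y) := by
    have hdiff : ∀ z ∈ Icc x y, DifferentiableAt ℝ (fun z => f z - c * z ^ n) z := fun z hz =>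
      (hf z hz).fun_sub (by fun_prop)
    refine monotoneOn_of_deriv_nonneg (convex_Icc x y)
      (fun z hz => (hdiff z hz).continuousAt.continuousWithinAt)
      (fun z hz => (hdiff z (interior_subset hz)).differentiableWithinAt) fun z hz => ?_
    rw [interior_Icc] at hz
    rw [deriv_fun_sub (hf z (Ioo_subset_Icc_self hz)) (by fun_prop)]
    simpa using hd z hz
  have hle := hmono (left_mem_Icc.2 hxy) (right_mem_Icc.2 hxy) hxy
  have hsuper : (y - x) ^ n + x ^ n ≤ y ^ n := by
    simpa using pow_add_pow_le (sub_nonneg.2 hxy) hx hn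
  nlinarith [mul_le_mul_of_nonneg_left hsuper hc]

lemma HasPosOrder.eventually_mul_abs_pow_le {f : ℝ → ℝ} {n : ℕ} (hf : HasPosOrder f n)
    (hn : n ≠ 0) :
    ∀ᶠ p : ℝ × ℝ in 𝓝 0 ×ˢ 𝓝 0, 0 ≤ p.1 → 0 ≤ p.2 →
      taylorCoeff f n / 2 * |p.1 - p.2| ^ n ≤ |f p.1 - f p.2| := by
  have hdiff : ∀ᶠ y in 𝓝 0, DifferentiableAt ℝ f y :=
    (hf.contDiffAt.eventually (by simp)).mono fun y hy => hy.differentiableAt (by simp)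
  obtain ⟨δ, hδ, hball⟩ := Metric.eventually_nhds_iff_ball.1
    (hdiff.and (eventually_nhdsWithin_iff.1 (hf.eventually_le_deriv hn)))
  have hmem {y : ℝ} (h0 : 0 ≤ y) (hy : y < δ) : y ∈ Metric.ball (0 : ℝ) δ := by
    rwa [mem_ball_zero_iff, norm_of_nonneg h0]
  have hordered (x y : ℝ) (hx : 0 ≤ x) (hxy : x ≤ y) (hy : y < δ) :
      taylorCoeff f n / 2 * |y - x| ^ n ≤ |f y - f x| := by
    rw [abs_of_nonneg (sub_nonneg.2 hxy)]
    refine (mul_sub_pow_le_sub_of_le_deriv hn (half_pos hf.taylorCoeff_pos).le hx hxy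
      (fun z hz => ?_) fun z hz => ?_).trans (le_abs_self _)
    · exact (hball z (hmem (hx.trans hz.1) (hz.2.trans_lt hy))).1
    · exact (hball z (hmem (hx.trans hz.1.le) (hz.2.trans hy))).2 (hx.trans_lt hz.1)
  refine eventually_prod_self_iff'.2 ⟨Iio δ, Iio_mem_nhds hδ, fun x hx y hy h0x h0y => ?_⟩
  rcases le_total x y with hxy | hyx
  · rw [abs_sub_comm, abs_sub_comm (f x)]
    exact hordered x y h0x hxy hy
  · exact hordered y x h0y hyx hx

end Monotonicity

section InverseExpansion

variable {ι : Type*} {l : Filter ι}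

lemma tendsto_of_sub_sub_isLittleO {q e : ι → ℝ} {a c : ℝ} (he : Tendsto e l (𝓝 0))
    (hq : (fun i => q i - a - c * e i) =o[l] e) : Tendsto q l (𝓝 a) := by
  simpa using ((hq.isBigO.trans_tendsto he).add (he.const_mul c)).add_const a

lemma rpow_sub_one_sub_isLittleO {q e : ι → ℝ} {c : ℝ} (p : ℝ) (he : Tendsto e l (𝓝 0))
    (hq : (fun i => q i - 1 - c * e i) =o[l] e) :
    (fun i => q i ^ p - 1 - p * c * e i) =o[l] e := by
  have hq_bigO : (fun i => q i - 1) =O[l] e := by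
    simpa using hq.isBigO.add ((isBigO_refl e l).const_mul_left c)
  have hderiv : HasDerivAt (fun x : ℝ => x ^ p) p 1 := by
    simpa using hasDerivAt_rpow_const (p := p) (Or.inl one_ne_zero)
  have hlin : (fun i => q i ^ p - 1 - (q i - 1) * p) =o[l] e := by
    simpa [Function.comp_def] using
      (hderiv.isLittleO.comp_tendsto (tendsto_of_sub_sub_isLittleO he hq)).trans_isBigO hq_bigO
  refine (hlin.add (hq.const_mul_left p)).congr_left fun i => ?_
  ring

lemma rpow_one_div_sub_isLittleO {φ : ℝ → ℝ} {A B : ℝ} {n : ℕ} (hn : n ≠ 0) (hA : 0 < A)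
    (hφ : (fun y => φ y - A * y ^ n - B * y ^ (n + 1)) =o[𝓝[>] 0] fun y => y ^ (n + 1)) :
    (fun y => φ y ^ (1 / n : ℝ) - A ^ (1 / n : ℝ) * y - A ^ (1 / n : ℝ) * (B / (n * A)) * y ^ 2)
      =o[𝓝[>] 0] fun y => y ^ 2 := by
  set q : ℝ → ℝ := fun y => φ y / (A * y ^ n) with hq_def
  have hpos : ∀ᶠ y : ℝ in 𝓝[>] 0, 0 < y := self_mem_nhdsWithin
  have hid : Tendsto (fun y : ℝ => y) (𝓝[>] 0) (𝓝 0) := nhdsWithin_le_nhds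
  have hq : (fun y => q y - 1 - B / A * y) =o[𝓝[>] 0] fun y => y := by
    refine ((hφ.mul_isBigO (isBigO_refl (fun y => (y ^ n)⁻¹) _)).const_mul_left A⁻¹).congr' ?_ ?_
      <;> filter_upwards [hpos] with y hy
    · simp only [hq_def]
      field_simp
      ring
    · field_simp
      ring
  have hq_pos : ∀ᶠ y in 𝓝[>] 0, 0 < q y :=
    (tendsto_of_sub_sub_isLittleO hid hq).eventually (lt_mem_nhds one_pos)
  refine ((isBigO_refl (fun y : ℝ => A ^ (1 / n : ℝ) * y) _).mul_isLittleO
    (rpow_sub_one_sub_isLittleO (1 / n : ℝ) hid hq)).trans_isBigO ?_ |>.congr' ?_ .rfl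
  · exact ((isBigO_refl (fun y : ℝ => y ^ 2) _).const_mul_left (A ^ (1 / n : ℝ))).congr_left
      fun y => by ring
  · filter_upwards [hpos, hq_pos] with y hy hqy
    have hfactor : φ y = A * y ^ n * q y := by
      simp only [hq_def]
      field_simp
    rw [hfactor, mul_rpow (by positivity) hqy.le, mul_rpow hA.le (by positivity), one_div,
      pow_rpow_inv_natCast hy.le hn]
    field_simp

lemma sub_isLittleO_of_quadratic {y ρ : ι → ℝ} {α γ : ℝ} (hα : α ≠ 0) (hy : Tendsto y l (𝓝 0))
    (hρ : (fun i => ρ i - α * y i - γ * y i ^ 2) =o[l] fun i => y i ^ 2) :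
    (fun i => y i - ρ i / α + γ / α ^ 3 * ρ i ^ 2) =o[l] fun i => ρ i ^ 2 := by
  have hsq : (fun i => y i ^ 2) =o[l] y := by
    simpa [Function.comp_def] using (isLittleO_pow_id one_lt_two).comp_tendsto hy
  have hequiv : ρ ~[l] fun i => α * y i := by
    refine ((hρ.trans hsq).add (hsq.const_mul_left γ)).const_mul_right hα |>.congr_left fun i => ?_
    simp
  have hequiv_sq : (fun i => ρ i ^ 2) ~[l] fun i => (α * y i) ^ 2 := hequiv.pow 2
  have hy_bigO : (fun i => y i ^ 2) =O[l] fun i => ρ i ^ 2 := by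
    refine IsBigO.trans ?_ hequiv_sq.isBigO_symm
    simp only [mul_pow]
    exact (isBigO_refl _ l).const_mul_right (pow_ne_zero 2 hα)
  have hρ_sq : (fun i => ρ i ^ 2 - (α * y i) ^ 2) =o[l] fun i => ρ i ^ 2 :=
    hequiv_sq.symm.isLittleO.neg_left.congr_left fun i => by simp
  refine (((hρ.trans_isBigO hy_bigO).const_mul_left (-α⁻¹)).add
    (hρ_sq.const_mul_left (γ / α ^ 3))).congr_left fun i => ?_
  field_simp
  ring


lemma rpow_one_div_sq {x : ℝ} (hx : 0 ≤ x) (a : ℝ) : (x ^ (1 / a)) ^ 2 = x ^ (2 / a) := by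
  rw [← rpow_mul_natCast hx]
  congr 1
  push_cast
  ring

end InverseExpansion

section RootBranch

lemma contDiffAt_of_comp {𝕜 : Type*} [RCLike 𝕜] {E F G : Type*}
    [NormedAddCommGroup E] [NormedSpace 𝕜 E] [NormedAddCommGroup F] [NormedSpace 𝕜 F]
    [CompleteSpace F] [NormedAddCommGroup G] [NormedSpace 𝕜 G]
    {m : WithTop ℕ∞} (hm : m ≠ 0) {h : F → E} {h' : F ≃L[𝕜] E} {η : G → F} {t : G}
    (hh : ContDiffAt 𝕜 m h (η t)) (hh' : HasFDerivAt h (h' : F →L[𝕜] E) (η t))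
    (hη : ContinuousAt η t) (hcomp : ContDiffAt 𝕜 m (h ∘ η) t) : ContDiffAt 𝕜 m η t := by
  refine ((hh.to_localInverse hh' hm).comp t hcomp).congr_of_eventuallyEq ?_
  filter_upwards [hη.eventually (hh.hasStrictFDerivAt' hh' hm).eventually_left_inverse] with s hs
  exact hs.symm

lemma eventually_eventually_nhds_of_isOpen {X : Type*} [TopologicalSpace X] {s : Set X}
    (hs : IsOpen s) {a : X} {p : X → Prop} (hp : ∀ᶠ x in 𝓝[s] a, p x) :
    ∀ᶠ x in 𝓝[s] a, ∀ᶠ y in 𝓝 x, p y := by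
  filter_upwards [eventually_eventually_nhdsWithin.2 hp, self_mem_nhdsWithin] with x hx hxs
  rwa [hs.nhdsWithin_eq hxs] at hx

lemma eventually_continuousAt_of_holder {X Y : Type*} [PseudoMetricSpace X] [PseudoMetricSpace Y]
    {f : X → Y} {s : Set X} (hs : IsOpen s) {a : X} {C r : ℝ} (hr : 0 < r)
    (hf : ∀ᶠ p : X × X in 𝓝[s] a ×ˢ 𝓝[s] a, dist (f p.1) (f p.2) ≤ C * dist p.1 p.2 ^ r) :
    ∀ᶠ x in 𝓝[s] a, ContinuousAt f x := by
  obtain ⟨u, hu, hfu⟩ := eventually_prod_self_iff'.1 hf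
  filter_upwards [hu, eventually_eventually_nhds_of_isOpen hs hu] with x hx hxu
  have hbound : Tendsto (fun y => C * dist y x ^ r) (𝓝 x) (𝓝 0) := by
    have hcont : Continuous fun y => C * dist y x ^ r :=
      continuous_const.mul ((continuous_id.dist continuous_const).rpow_const fun _ => .inr hr.le)
    simpa [zero_rpow hr.ne'] using hcont.tendsto x
  exact tendsto_iff_dist_tendsto_zero.2 (squeeze_zero' (.of_forall fun _ => dist_nonneg)
    (hxu.mono fun y hy => hfu y hy x hx) hbound)

/-- A branch of roots of `1 + t * h y = 0` emanating from `y = 0` at time `t = 1`. -/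
structure IsRootBranch (h η : ℝ → ℝ) : Prop where
  eventually_root : ∀ᶠ t in 𝓝[>] 1, 1 + t * h (η t) = 0
  tendsto : Tendsto η (𝓝[>] 1) (𝓝 0)

namespace IsRootBranch

variable {h η η₁ η₂ : ℝ → ℝ} {n : ℕ}

lemma of_forall_abs_lt {ε δ : ℝ} (hε : 0 < ε) (hδ : 0 < δ)
    (hroot : ∀ t ∈ Ioo 1 (1 + ε), |η t| < δ → 1 + t * h (η t) = 0)
    (hlim : Tendsto η (𝓝[>] 1) (𝓝 0)) : IsRootBranch h η where
  eventually_root := by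
    filter_upwards [Ioo_mem_nhdsGT (lt_add_of_pos_right 1 hε),
      hlim.eventually (Metric.ball_mem_nhds 0 hδ)] with t ht hball
    exact hroot t ht (mem_ball_zero_iff.1 hball)
  tendsto := hlim

lemma comp_neg (hη : IsRootBranch h η) : IsRootBranch (fun y => h (-y)) (fun t => -η t) where
  eventually_root := by simpa using hη.eventually_root
  tendsto := by simpa using hη.tendsto.neg

lemma eventually_apply_eq (hη : IsRootBranch h η) : ∀ᶠ t in 𝓝[>] 1, h (η t) = -t⁻¹ := by
  filter_upwards [hη.eventually_root, self_mem_nhdsWithin] with t ht (ht1 : 1 < t)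
  have ht0 : t ≠ 0 := by positivity
  field_simp
  linarith

lemma eventually_neg (h₁ : IsRootBranch h η₁) (h₂ : IsRootBranch h η₂) (hh : HasPosOrder h n)
    (hn : n ≠ 0) (hlt : ∀ᶠ t in 𝓝[>] 1, η₁ t < η₂ t) : ∀ᶠ t in 𝓝[>] 1, η₁ t < 0 := by
  filter_upwards [(h₁.tendsto.prodMk h₂.tendsto).eventually (hh.eventually_mul_abs_pow_le hn),
    h₁.eventually_apply_eq, h₂.eventually_apply_eq, hlt] with t hexpand hval₁ hval₂ hlt_t
  by_contra! hnonneg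
  have hle := hexpand hnonneg (hnonneg.trans hlt_t.le)
  have hgap : 0 < |η₁ t - η₂ t| := abs_pos.2 (sub_neg.2 hlt_t).ne
  have hcoeff := hh.taylorCoeff_pos
  rw [hval₁, hval₂, sub_self, abs_zero] at hle
  exact hle.not_gt (by positivity)

lemma eventually_dist_le (hη : IsRootBranch h η) (hh : HasPosOrder h n) (hn : n ≠ 0)
    (hpos : ∀ᶠ t in 𝓝[>] 1, 0 < η t) :
    ∀ᶠ p : ℝ × ℝ in 𝓝[>] 1 ×ˢ 𝓝[>] 1,
      |η p.1 - η p.2| ≤ (2 / taylorCoeff h n) ^ (1 / n : ℝ) * |p.1 - p.2| ^ (1 / n : ℝ) := by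
  have hcoeff := hh.taylorCoeff_pos
  have hone : ∀ᶠ t : ℝ in 𝓝[>] 1, 1 < t := self_mem_nhdsWithin
  filter_upwards [(hη.tendsto.prodMap hη.tendsto).eventually (hh.eventually_mul_abs_pow_le hn),
    (hpos.and (hη.eventually_apply_eq.and hone)).prod_mk
      (hpos.and (hη.eventually_apply_eq.and hone))]
    with ⟨s, t⟩ hexpand ⟨⟨hηs, hvals, hs⟩, hηt, hvalt, ht⟩
  have hinv : |h (η s) - h (η t)| ≤ |s - t| := by
    rw [hvals, hvalt, show -s⁻¹ - -t⁻¹ = (s - t) / (s * t) by field_simp; ring, abs_div]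
    exact div_le_self (abs_nonneg _)
      ((one_lt_mul_of_lt_of_le hs ht.le).le.trans (le_abs_self _))
  have hpow : |η s - η t| ^ n ≤ 2 / taylorCoeff h n * |s - t| := by
    have := (hexpand hηs.le hηt.le).trans hinv
    simp only [Prod.map_fst, Prod.map_snd] at this
    field_simp
    linarith
  rw [← mul_rpow (by positivity) (abs_nonneg _), one_div,
    le_rpow_inv_iff_of_pos (abs_nonneg _) (by positivity) (by positivity), rpow_natCast]
  exact hpow

lemma eventually_contDiffAt (hη : IsRootBranch h η) (hh : HasPosOrder h n) (hn : n ≠ 0)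
    (hpos : ∀ᶠ t in 𝓝[>] 1, 0 < η t) : ∀ᶠ t in 𝓝[>] 1, ContDiffAt ℝ (n + 1 : ℕ) η t := by
  have hη_pos : Tendsto η (𝓝[>] 1) (𝓝[>] 0) := tendsto_nhdsWithin_iff.2 ⟨hη.tendsto, hpos⟩
  have hcont : ∀ᶠ t in 𝓝[>] 1, ContinuousAt η t :=
    eventually_continuousAt_of_holder isOpen_Ioi (by positivity)
      (hη.eventually_dist_le hh hn hpos)
  filter_upwards [hcont, hpos, hη.tendsto.eventually (hh.contDiffAt.eventually (by simp)),
    hη_pos.eventually (hh.eventually_le_deriv hn), self_mem_nhdsWithin,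
    eventually_eventually_nhds_of_isOpen isOpen_Ioi hη.eventually_apply_eq]
    with t hcont hpos hsmooth hderiv_ge (ht : 1 < t) hval
  have hderiv : deriv h (η t) ≠ 0 := by
    have := hh.taylorCoeff_pos
    exact (lt_of_lt_of_le (by positivity) hderiv_ge).ne'
  have hinv : ContDiffAt ℝ (n + 1 : ℕ) (fun s : ℝ => -s⁻¹) t :=
    (contDiffAt_inv ℝ (by positivity)).neg
  exact contDiffAt_of_comp (by simp) hsmooth
    ((hsmooth.differentiableAt (by simp)).hasDerivAt.hasFDerivAt_equiv hderiv) hcont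
    (hinv.congr_of_eventuallyEq hval)

end IsRootBranch

lemma neg_inv_sub_one_sub_isLittleO {h : ℝ → ℝ} {n : ℕ} (hh : HasPosOrder h n) (hn : 2 ≤ n)
    (h0 : h 0 = -1) :
    (fun y => -(h y)⁻¹ - 1 - taylorCoeff h n * y ^ n - taylorCoeff h (n + 1) * y ^ (n + 1))
      =o[𝓝 0] fun y => y ^ (n + 1) := by
  have hexp := hh.sub_isLittleO (by omega)
  have hpow : (fun y : ℝ => y ^ (n + 1)) =O[𝓝 0] fun y => y ^ n :=
    (isLittleO_pow_pow n.lt_succ_self).isBigO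
  have hdefect : (fun y => h y + 1) =O[𝓝 0] fun y => y ^ n := by
    refine (((hexp.isBigO.trans hpow).add ((isBigO_refl _ _).const_mul_left (taylorCoeff h n))).add
      (hpow.const_mul_left (taylorCoeff h (n + 1)))).congr_left fun y => ?_
    rw [h0]
    ring
  have hlim : Tendsto h (𝓝 0) (𝓝 (-1)) := h0 ▸ hh.contDiffAt.continuousAt.tendsto
  have hinv : (fun y => -(h y)⁻¹) =O[𝓝 0] fun _ => (1 : ℝ) :=
    (hlim.inv₀ (by norm_num)).neg.isBigO_one ℝ
  -- `-h⁻¹ - 1 = (h + 1) - (h + 1)² h⁻¹`, and the quadratic term is `O(y²ⁿ)`.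
  have hquad : (fun y => (h y + 1) * (h y + 1) * -(h y)⁻¹) =o[𝓝 0] fun y => y ^ (n + 1) :=
    (((hdefect.mul hdefect).mul hinv).congr_right fun y => by
      rw [mul_one, ← pow_add]).trans_isLittleO (isLittleO_pow_pow (by omega))
  refine (hexp.add hquad).congr' ?_ .rfl
  filter_upwards [hlim.eventually_ne (by norm_num : (-1 : ℝ) ≠ 0)] with y hy
  rw [h0]
  field_simp
  ring

lemma IsRootBranch.sub_isLittleO {h η : ℝ → ℝ} {n : ℕ} (hη : IsRootBranch h η)
    (hh : HasPosOrder h n) (hn : 2 ≤ n) (h0 : h 0 = -1) (hpos : ∀ᶠ t in 𝓝[>] 1, 0 < η t) :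
    (fun t => η t - taylorCoeff h n ^ (-1 / n : ℝ) * (t - 1) ^ (1 / n : ℝ)
        + taylorCoeff h (n + 1) / (n * taylorCoeff h n) * taylorCoeff h n ^ (-2 / n : ℝ)
          * (t - 1) ^ (2 / n : ℝ))
      =o[𝓝[>] 1] fun t => (t - 1) ^ (2 / n : ℝ) := by
  have hcoeff := hh.taylorCoeff_pos
  have hid : Tendsto (fun y : ℝ => y) (𝓝[>] 0) (𝓝 0) := nhdsWithin_le_nhds
  have hexp := (sub_isLittleO_of_quadratic (rpow_pos_of_pos hcoeff _).ne' hid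
    (rpow_one_div_sub_isLittleO (by omega) hcoeff
      ((neg_inv_sub_one_sub_isLittleO hh hn h0).mono nhdsWithin_le_nhds))).comp_tendsto
    (tendsto_nhdsWithin_iff.2 ⟨hη.tendsto, hpos⟩)
  refine hexp.congr' ?_ ?_ <;>
    filter_upwards [hη.eventually_apply_eq, self_mem_nhdsWithin] with t hval (ht : 1 < t) <;>
    simp only [Function.comp_apply, hval, inv_neg, inv_inv, neg_neg,
      rpow_one_div_sq (sub_nonneg.2 ht.le)]
  rw [neg_div, neg_div, rpow_neg hcoeff.le, rpow_neg hcoeff.le, ← rpow_one_div_sq hcoeff.le]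
  field_simp

end RootBranch

lemma exists_le_forall_Ioo_of_eventually_prod {a ε₀ : ℝ} (hε₀ : 0 < ε₀) {r : ℝ × ℝ → Prop}
    (hr : ∀ᶠ p in 𝓝[>] a ×ˢ 𝓝[>] a, r p) :
    ∃ ε, 0 < ε ∧ ε ≤ ε₀ ∧ ∀ s ∈ Ioo a (a + ε), ∀ t ∈ Ioo a (a + ε), r (s, t) := by
  obtain ⟨u, hu, hur⟩ := eventually_prod_self_iff'.1 hr
  obtain ⟨b, hab, hbu⟩ := mem_nhdsGT_iff_exists_Ioo_subset.1 hu
  have hsub : Ioo a (a + min ε₀ (b - a)) ⊆ u :=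
    (Ioo_subset_Ioo_right (by linarith [min_le_right ε₀ (b - a)])).trans hbu
  exact ⟨min ε₀ (b - a), lt_min hε₀ (sub_pos.2 hab), min_le_left _ _,
    fun s hs t ht => hur s (hsub hs) t (hsub ht)⟩

theorem statement4_general {h ηm ηp : ℝ → ℝ} {n : ℕ} {ε₀ : ℝ} (hh : HasPosOrder h n) (hn : Even n)
    (hn0 : n ≠ 0) (h0 : h 0 = -1) (hε₀ : 0 < ε₀) (hm : IsRootBranch h ηm)
    (hp : IsRootBranch h ηp) (hlt : ∀ᶠ t in 𝓝[>] 1, ηm t < ηp t) :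
    ∃ ε : ℝ, 0 < ε ∧ ε ≤ ε₀ ∧
      ContDiffOn ℝ (n + 1 : ℕ) ηp (Ioo 1 (1 + ε)) ∧
      ContDiffOn ℝ (n + 1 : ℕ) ηm (Ioo 1 (1 + ε)) ∧
      (∃ C : ℝ, ∀ t₁ ∈ Ioo (1 : ℝ) (1 + ε), ∀ t₂ ∈ Ioo (1 : ℝ) (1 + ε),
        |ηp t₁ - ηp t₂| ≤ C * |t₁ - t₂| ^ (1 / n : ℝ) ∧
        |ηm t₁ - ηm t₂| ≤ C * |t₁ - t₂| ^ (1 / n : ℝ)) ∧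
      (fun t => ηp t - taylorCoeff h n ^ (-1 / n : ℝ) * (t - 1) ^ (1 / n : ℝ)
          + taylorCoeff h (n + 1) / (n * taylorCoeff h n) * taylorCoeff h n ^ (-2 / n : ℝ)
            * (t - 1) ^ (2 / n : ℝ))
        =o[𝓝[>] 1] (fun t => (t - 1) ^ (2 / n : ℝ)) ∧
      (fun t => ηm t + taylorCoeff h n ^ (-1 / n : ℝ) * (t - 1) ^ (1 / n : ℝ)
          + taylorCoeff h (n + 1) / (n * taylorCoeff h n) * taylorCoeff h n ^ (-2 / n : ℝ)
            * (t - 1) ^ (2 / n : ℝ))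
        =o[𝓝[>] 1] (fun t => (t - 1) ^ (2 / n : ℝ)) := by
  have hm' := hm.comp_neg
  have hh' := hh.comp_neg hn
  have hpos : ∀ᶠ t in 𝓝[>] 1, 0 < ηp t :=
    (hp.comp_neg.eventually_neg hm' hh' hn0 (hlt.mono fun _ => neg_lt_neg)).mono
      fun _ => neg_lt_zero.1
  have hneg : ∀ᶠ t in 𝓝[>] 1, 0 < -ηm t :=
    (hm.eventually_neg hp hh hn0 hlt).mono fun _ => neg_pos.2
  obtain ⟨ε, hε, hεle, hforall⟩ := exists_le_forall_Ioo_of_eventually_prod hε₀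
    (((hp.eventually_contDiffAt hh hn0 hpos).and
      (hm'.eventually_contDiffAt hh' hn0 hneg)).prod_inl (𝓝[>] 1) |>.and
    ((hp.eventually_dist_le hh hn0 hpos).and (hm'.eventually_dist_le hh' hn0 hneg)))
  have hcoeff : taylorCoeff (fun y => h (-y)) n = taylorCoeff h n := by
    rw [taylorCoeff_comp_neg, hn.neg_one_pow, one_mul]
  have hcoeff_succ : taylorCoeff (fun y => h (-y)) (n + 1) = -taylorCoeff h (n + 1) := by
    rw [taylorCoeff_comp_neg, hn.add_one.neg_one_pow, neg_one_mul]
  rw [hcoeff] at hforall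
  have hn2 : 2 ≤ n := by obtain ⟨m, rfl⟩ := hn; omega
  refine ⟨ε, hε, hεle, fun t ht => (hforall t ht t ht).1.1.contDiffWithinAt,
    fun t ht => ?_, ⟨_, fun s hs t ht => ⟨(hforall s hs t ht).2.1, ?_⟩⟩,
    hp.sub_isLittleO hh hn2 h0 hpos, ?_⟩
  · simpa using (hforall t ht t ht).1.2.neg.contDiffWithinAt
  · rw [abs_sub_comm, ← neg_sub_neg]
    exact (hforall s hs t ht).2.2
  · have hexp := (hm'.sub_isLittleO hh' hn2 (by simpa using h0) hneg).neg_left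
    rw [hcoeff, hcoeff_succ] at hexp
    exact hexp.congr_left fun t => by ring

namespace AssumptionA

variable {k : ℕ} {g : ℝ → ℝ}

lemma taylorCoeff_eq (hA : AssumptionA k g) {j : ℕ} (hj : 2 ≤ j) (hjk : j ≤ 2 * k + 1) :
    taylorCoeff g j = if j = 2 * k + 1 then 1 else 0 := by
  obtain ⟨-, -, -, -, -, r, hr, hgr, hO⟩ := hA
  have hr0 : iteratedDeriv j r 0 = 0 :=
    (hO j (by omega)).eq_zero_imp.self_of_nhds (zero_pow (by omega))
  have hid : iteratedDeriv j (fun x : ℝ => x) 0 = 0 := by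
    simpa [show j ≠ 1 by omega] using iteratedDeriv_fun_pow_zero (𝕜 := ℝ) (n := j) (m := 1)
  have hr_j : ContDiffAt ℝ j r 0 := (hr.of_le (by norm_cast; omega)).contDiffAt
  rw [taylorCoeff, Filter.EventuallyEq.iteratedDeriv_eq j hgr,
    iteratedDeriv_fun_add (by fun_prop) hr_j, iteratedDeriv_fun_add (by fun_prop) (by fun_prop),
    iteratedDeriv_fun_neg, hid, hr0, iteratedDeriv_fun_pow_zero]
  split_ifs with hj_top
  · subst hj_top
    simp [Nat.factorial_ne_zero]
  · simp

lemma taylorCoeff_deriv_two_mul (hA : AssumptionA k g) :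
    taylorCoeff (deriv g) (2 * k) = 2 * k + 1 := by
  have hk := hA.1
  rw [taylorCoeff_deriv, hA.taylorCoeff_eq (by omega) le_rfl]
  simp

lemma hasPosOrder_deriv (hA : AssumptionA k g) : HasPosOrder (deriv g) (2 * k) where
  contDiffAt := hA.2.1.contDiffAt.derivWithin (by norm_cast)
  taylorCoeff_eq_zero j hj hjk := by
    rw [taylorCoeff_deriv, hA.taylorCoeff_eq (by omega) (by omega), if_neg (by omega), mul_zero]
  taylorCoeff_pos := by
    rw [hA.taylorCoeff_deriv_two_mul]
    positivity

end AssumptionA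

lemma taylorCoeff_deriv_div_mul_rpow {k : ℕ} (hk : k ≠ 0) (g : ℝ → ℝ) :
    taylorCoeff (deriv g) (2 * k + 1) / (2 * k * (2 * k + 1))
        * (2 * k + 1 : ℝ) ^ (-2 / (2 * k) : ℝ)
      = iteratedDeriv (2 * k + 2) g 0 / (2 * (k : ℝ) * (Nat.factorial (2 * k) : ℝ))
        * (2 * (k : ℝ) + 1) ^ (-(2 * (k : ℝ) + 1) / (k : ℝ)) := by
  have hexponent : (-(2 * (k : ℝ) + 1) / k) = -2 / (2 * k) - (2 : ℕ) := by
    push_cast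
    field_simp
    ring
  rw [hexponent, rpow_sub_natCast (by positivity), taylorCoeff, ← iteratedDeriv_succ',
    Nat.factorial_succ]
  push_cast
  field_simp

/-- Under assumption (A_k), the two root functions `η₋(t) < η₊(t)` of `1 + t g'(y) = 0`
near `y = 0` (for `t > 1` close to `1`) are `C^{2k+1}` in `(1, 1+ε)`, Hölder continuous of
exponent `1/(2k)`, and admit the expansions
`η₊(t) = (2k+1)^{-1/(2k)} (t-1)^{1/(2k)} - (g^{(2k+2)}(0)/(2k (2k)!)) (2k+1)^{-(2k+1)/k} (t-1)^{1/k} + o((t-1)^{1/k})`,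
`η₋(t) = -(2k+1)^{-1/(2k)} (t-1)^{1/(2k)} - (g^{(2k+2)}(0)/(2k (2k)!)) (2k+1)^{-(2k+1)/k} (t-1)^{1/k} + o((t-1)^{1/k})`. -/
theorem statement4 (k : ℕ) (g : ℝ → ℝ) (hA : AssumptionA k g)
    (ε₀ δ₀ : ℝ) (hε₀ : 0 < ε₀) (hδ₀ : 0 < δ₀)
    (ηm ηp : ℝ → ℝ)
    (hlt : ∀ t ∈ Ioo (1 : ℝ) (1 + ε₀), ηm t < ηp t)
    (hroots : ∀ t ∈ Ioo (1 : ℝ) (1 + ε₀), ∀ z : ℝ, |z| < δ₀ →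
      (1 + t * deriv g z = 0 ↔ z = ηm t ∨ z = ηp t))
    (hsm : Tendsto ηm (𝓝[>] (1 : ℝ)) (𝓝 0))
    (hsp : Tendsto ηp (𝓝[>] (1 : ℝ)) (𝓝 0)) :
    ∃ ε : ℝ, 0 < ε ∧ ε ≤ ε₀ ∧
      ContDiffOn ℝ (2 * k + 1 : ℕ) ηp (Ioo 1 (1 + ε)) ∧
      ContDiffOn ℝ (2 * k + 1 : ℕ) ηm (Ioo 1 (1 + ε)) ∧
      (∃ C : ℝ, ∀ t₁ ∈ Ioo (1 : ℝ) (1 + ε), ∀ t₂ ∈ Ioo (1 : ℝ) (1 + ε),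
        |ηp t₁ - ηp t₂| ≤ C * |t₁ - t₂| ^ ((1 : ℝ) / (2 * (k : ℝ))) ∧
        |ηm t₁ - ηm t₂| ≤ C * |t₁ - t₂| ^ ((1 : ℝ) / (2 * (k : ℝ)))) ∧
      (fun t => ηp t - (2 * (k : ℝ) + 1) ^ (-(1 : ℝ) / (2 * (k : ℝ))) * (t - 1) ^ ((1 : ℝ) / (2 * (k : ℝ)))
          + iteratedDeriv (2 * k + 2) g 0 / (2 * (k : ℝ) * (Nat.factorial (2 * k) : ℝ))
            * (2 * (k : ℝ) + 1) ^ (-(2 * (k : ℝ) + 1) / (k : ℝ)) * (t - 1) ^ ((1 : ℝ) / (k : ℝ)))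
        =o[𝓝[>] (1 : ℝ)] (fun t => (t - 1) ^ ((1 : ℝ) / (k : ℝ))) ∧
      (fun t => ηm t + (2 * (k : ℝ) + 1) ^ (-(1 : ℝ) / (2 * (k : ℝ))) * (t - 1) ^ ((1 : ℝ) / (2 * (k : ℝ)))
          + iteratedDeriv (2 * k + 2) g 0 / (2 * (k : ℝ) * (Nat.factorial (2 * k) : ℝ))
            * (2 * (k : ℝ) + 1) ^ (-(2 * (k : ℝ) + 1) / (k : ℝ)) * (t - 1) ^ ((1 : ℝ) / (k : ℝ)))
        =o[𝓝[>] (1 : ℝ)] (fun t => (t - 1) ^ ((1 : ℝ) / (k : ℝ))) := by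
  have hk : k ≠ 0 := Nat.one_le_iff_ne_zero.1 hA.1
  have hexponent : (2 : ℝ) / (2 * k) = 1 / k := by field_simp
  simpa only [Nat.cast_mul, Nat.cast_ofNat, hA.taylorCoeff_deriv_two_mul,
    taylorCoeff_deriv_div_mul_rpow hk, hexponent] using
    statement4_general hA.hasPosOrder_deriv (even_two_mul k) (by omega) hA.2.2.2.1 hε₀
      (.of_forall_abs_lt hε₀ hδ₀ (fun t ht hz => (hroots t ht _ hz).2 (.inl rfl)) hsm)
      (.of_forall_abs_lt hε₀ hδ₀ (fun t ht hz => (hroots t ht _ hz).2 (.inr rfl)) hsp)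
      (eventually_of_mem (Ioo_mem_nhdsGT (lt_add_of_pos_right 1 hε₀)) hlt)
end
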